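/- arXiv:math/9907090 — 13 statements merged into one kernel-verified Lean document; each statement's English description precedes it below -/
import Mathlib

section
/- Let Φ be a family of real sequences each tending to ∞, satisfying condition (C), let d be an extended real number (d ∈ ℝ ∪ {−∞, ∞}), and let f : ℝ → ℝ be continuous. If for every sequence (x_n) belonging to Φ the sequence (f(x_n)) converges to d (in the extended reals), then f(x) converges to d as x → ∞. -/
open Filter Set

/-- The sequence `a` tends to `∞`. -/
def TendsToInfty (a : ℕ → ℝ) : Prop := Filter.Tendsto a Filter.atTop Filter.atTop

/-- Condition (C): for every open set `U ⊆ ℝ` unbounded above, some sequence of `Φ`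
has infinitely many terms in `U`. -/
def CondC (Φ : Set (ℕ → ℝ)) : Prop :=
  ∀ U : Set ℝ, IsOpen U → ¬ BddAbove U → ∃ a ∈ Φ, {n : ℕ | a n ∈ U}.Infinite

/-- Condition (1): the family `{f_a : a ∈ Φ}` is bounded with respect to eventual
domination, stated without defining `f_a`. -/
def Cond1 (Φ : Set (ℕ → ℝ)) : Prop :=
  ∃ g : ℕ → ℕ, ∀ a ∈ Φ, ∀ᶠ i : ℕ in Filter.atTop, ∀ j : ℕ, 1 ≤ j →
    Set.Ioi (i : ℝ) ⊆ ⋃ n : ℕ, Set.Ioo (a n - 1 / j) (a n + 1 / j) → j ≤ g i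

/-- Condition (2): `0 < a (n+1) - a n ≤ a n - a (n-1)` for all `n ≥ 1`. -/
def Cond2 (a : ℕ → ℝ) : Prop :=
  ∀ n : ℕ, 0 < a (n + 2) - a (n + 1) ∧ a (n + 2) - a (n + 1) ≤ a (n + 1) - a n

/-- Condition (3): the gaps of `a` are bounded below by a positive constant. -/
def Cond3 (a : ℕ → ℝ) : Prop :=
  ∃ r : ℝ, 0 < r ∧ ∀ n : ℕ, r < a (n + 1) - a n

/-- Condition (C_m): for every interlaced pair of sequences `x, y` tending to `∞`,
some `a ∈ Φ` has, for infinitely many `k`, at least `m` terms in `(x k, y k)`. -/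
def CondCm (m : ℕ) (Φ : Set (ℕ → ℝ)) : Prop :=
  ∀ x y : ℕ → ℝ, (∀ k, x k < y k) → (∀ k, y k < x (k + 1)) →
    Filter.Tendsto x Filter.atTop Filter.atTop →
    ∃ a ∈ Φ, {k : ℕ | ∃ s : Finset ℕ, m ≤ s.card ∧
      ∀ n ∈ s, a n ∈ Set.Ioo (x k) (y k)}.Infinite

/-- `non(M)`: the least cardinality of a non-meagre subset of `ℝ`. -/
noncomputable def nonMeagreCard : Cardinal :=
  sInf {c : Cardinal | ∃ X : Set ℝ, ¬ IsMeagre X ∧ c = Cardinal.mk X}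

/-- The bounding number `b`. -/
noncomputable def boundingNumber : Cardinal :=
  sInf {c : Cardinal | ∃ F : Set (ℕ → ℕ),
    (¬ ∃ g : ℕ → ℕ, ∀ f ∈ F, {i : ℕ | g i < f i}.Finite) ∧ c = Cardinal.mk F}

theorem not_bddAbove_of_frequently_mem_atTop {α : Type*} [Preorder α] [NoMaxOrder α] {s : Set α}
    (hs : ∃ᶠ x in atTop, x ∈ s) : ¬ BddAbove s := by
  rintro ⟨M, hM⟩
  obtain ⟨x, hxs, hMx⟩ := (hs.and_eventually (eventually_gt_atTop M)).exists
  exact (hM hxs).not_gt hMx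

theorem CondC.exists_frequently_mem {Φ : Set (ℕ → ℝ)} (hC : CondC Φ) {U : Set ℝ} (hU : IsOpen U)
    (hfreq : ∃ᶠ x in atTop, x ∈ U) : ∃ a ∈ Φ, ∃ᶠ n in atTop, a n ∈ U := by
  obtain ⟨a, ha, hinf⟩ := hC U hU (not_bddAbove_of_frequently_mem_atTop hfreq)
  exact ⟨a, ha, Nat.frequently_atTop_iff_infinite.2 hinf⟩

theorem proposition1_general {ι X Y : Type*} [TopologicalSpace X] [TopologicalSpace Y]
    [RegularSpace Y] {l : Filter ι} {F : Filter X} {Φ : Set (ι → X)}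
    (hmeet : ∀ U : Set X, IsOpen U → (∃ᶠ x in F, x ∈ U) → ∃ a ∈ Φ, ∃ᶠ i in l, a i ∈ U)
    {f : X → Y} (hf : Continuous f) {d : Y}
    (hconv : ∀ a ∈ Φ, Tendsto (fun i => f (a i)) l (nhds d)) : Tendsto f F (nhds d) := by
  -- Regularity allows closed neighbourhoods `V`, so that `f` leaves `V` on an open set.
  refine (closed_nhds_basis d).tendsto_right_iff.2 fun V ⟨hV, hVclosed⟩ => ?_
  by_contra hleave
  have hopen : IsOpen (f ⁻¹' Vᶜ) := hVclosed.isOpen_compl.preimage hf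
  obtain ⟨a, ha, hfreq⟩ := hmeet (f ⁻¹' Vᶜ) hopen (not_eventually.1 hleave)
  have hstay : ∀ᶠ i in l, f (a i) ∈ V := (hconv a ha).eventually hV
  exact hfreq (hstay.mono fun _ hmem hnotMem => hnotMem hmem)

theorem proposition1 (Φ : Set (ℕ → ℝ)) (hΦ : ∀ a ∈ Φ, TendsToInfty a)
    (hC : CondC Φ) (d : EReal) (f : ℝ → ℝ) (hf : Continuous f)
    (hconv : ∀ a ∈ Φ, Filter.Tendsto (fun n : ℕ => ((f (a n) : ℝ) : EReal))
      Filter.atTop (nhds d)) :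
    Filter.Tendsto (fun x : ℝ => ((f x : ℝ) : EReal)) Filter.atTop (nhds d) :=
  proposition1_general (fun _ => hC.exists_frequently_mem)
    (continuous_coe_real_ereal.comp hf) hconv
end

section
/- Let Φ be a family of real sequences each tending to ∞ and let d be an extended real number (d ∈ ℝ ∪ {−∞, ∞}). Assume that for every continuous f : ℝ → ℝ, if the sequence (f(x_n)) converges to d (in the extended reals) for every sequence (x_n) belonging to Φ, then f(x) converges to d as x → ∞. Then Φ satisfies condition (C). -/
/-!
Suppose that `U` is open and unbounded above, but every `a ∈ Φ` is eventually outside `U`. Inside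
`U` there is a closed set `S` which is still unbounded above, namely the set of terms of a sequence
in `U` tending to `∞`. Start from a continuous `g` with `g → d` at `∞` and modify it inside `U`,
by Urysohn's lemma, to a continuous `f` with a constant value `c ≠ d` on `S`. Then `f → d` along
every `a ∈ Φ`, since there `f` is eventually equal to `g`, while `f` does not tend to `d` at `∞`.
-/

open Filter Set

section

variable {X E : Type*} [TopologicalSpace X] [AddCommGroup E] [TopologicalSpace E]
  [IsTopologicalAddGroup E] [Module ℝ E] [ContinuousSMul ℝ E]

theorem exists_continuous_eqOn_eqOn_of_isClosed [NormalSpace X] {s t : Set X} (hs : IsClosed s)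
    (ht : IsClosed t) (hst : Disjoint s t) {g h : X → E} (hg : Continuous g)
    (hh : Continuous h) : ∃ f : X → E, Continuous f ∧ EqOn f g s ∧ EqOn f h t := by
  obtain ⟨ψ, hψ_zero, hψ_one, -⟩ := exists_continuous_zero_one_of_isClosed hs ht hst
  refine ⟨fun x => AffineMap.lineMap (g x) (h x) (ψ x), hg.lineMap hh ψ.continuous,
    fun x hx => ?_, fun x hx => ?_⟩
  · simp [hψ_zero hx]
  · simp [hψ_one hx]

theorem isClosed_range_of_tendsto_cofinite_cocompact {ι : Type*} [T2Space X]
    [WeaklyLocallyCompactSpace X] {x : ι → X} (hx : Tendsto x cofinite (cocompact X)) :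
    IsClosed (range x) := by
  -- For the discrete topology on `ι`, the map `x` is proper.
  let _ : TopologicalSpace ι := ⊥
  have : DiscreteTopology ι := ⟨rfl⟩
  have hproper : IsProperMap x := isProperMap_iff_tendsto_cocompact.2
    ⟨continuous_of_discreteTopology, by rwa [cocompact_eq_cofinite]⟩
  exact hproper.isClosed_range

variable [T2Space X] [WeaklyLocallyCompactSpace X] {l : Filter X} [l.IsCountablyGenerated]
  {U : Set X}

theorem exists_isClosed_subset_frequently_mem (hl : l ≤ cocompact X) (hU : ∃ᶠ x in l, x ∈ U) :
    ∃ S ⊆ U, IsClosed S ∧ ∃ᶠ x in l, x ∈ S := by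
  obtain ⟨x, hx, hxU⟩ := exists_seq_forall_of_frequently hU
  have hx_cocompact : Tendsto x cofinite (cocompact X) := by
    rw [Nat.cofinite_eq_atTop]
    exact hx.mono_right hl
  exact ⟨range x, range_subset_iff.2 hxU,
    isClosed_range_of_tendsto_cofinite_cocompact hx_cocompact,
    hx.frequently (Frequently.of_forall mem_range_self)⟩

theorem exists_continuous_tendsto_inf_principal_compl_not_tendsto [NormalSpace X] {Y : Type*}
    [TopologicalSpace Y] [T1Space Y] (hl : l ≤ cocompact X) (hU : IsOpen U)
    (hlU : ∃ᶠ x in l, x ∈ U) {φ : E → Y} {g : X → E} (hg : Continuous g) {d : Y}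
    (hgd : Tendsto (φ ∘ g) l (nhds d)) {c : E} (hc : φ c ≠ d) :
    ∃ f : X → E, Continuous f ∧ Tendsto (φ ∘ f) (l ⊓ 𝓟 Uᶜ) (nhds d) ∧
      ¬ Tendsto (φ ∘ f) l (nhds d) := by
  obtain ⟨S, hSU, hS, hlS⟩ := exists_isClosed_subset_frequently_mem hl hlU
  obtain ⟨f, hf, hfg, hfc⟩ := exists_continuous_eqOn_eqOn_of_isClosed hU.isClosed_compl hS
    (disjoint_compl_left_iff_subset.2 hSU) hg (continuous_const (y := c))
  refine ⟨f, hf, (hgd.mono_left inf_le_left).congr' ?_, fun hfd => hlS ?_⟩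
  · exact (hfg.symm.eventuallyEq.filter_mono inf_le_right).fun_comp φ
  · filter_upwards [hfd.eventually (eventually_ne_nhds hc.symm)] with x hx hxS
    exact hx (congrArg φ (hfc hxS))

end

theorem frequently_atTop_mem_iff_not_bddAbove {α : Type*} [LinearOrder α] [Nonempty α]
    [NoMaxOrder α] {s : Set α} : (∃ᶠ x in atTop, x ∈ s) ↔ ¬ BddAbove s := by
  simp only [frequently_atTop', not_bddAbove_iff, and_comm, gt_iff_lt]

theorem exists_continuous_tendsto_coe_ereal (d : EReal) :
    ∃ g : ℝ → ℝ, Continuous g ∧ Tendsto (Real.toEReal ∘ g) atTop (nhds d) := by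
  induction d with
  | bot =>
    exact ⟨Neg.neg, continuous_neg, EReal.tendsto_coe_nhds_bot_iff.2 tendsto_neg_atTop_atBot⟩
  | coe r => exact ⟨fun _ => r, continuous_const, tendsto_const_nhds⟩
  | top => exact ⟨id, continuous_id, EReal.tendsto_coe_nhds_top_iff.2 tendsto_id⟩

theorem proposition2 (Φ : Set (ℕ → ℝ)) (hΦ : ∀ a ∈ Φ, TendsToInfty a) (d : EReal)
    (h : ∀ f : ℝ → ℝ, Continuous f →
      (∀ a ∈ Φ, Filter.Tendsto (fun n : ℕ => ((f (a n) : ℝ) : EReal))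
        Filter.atTop (nhds d)) →
      Filter.Tendsto (fun x : ℝ => ((f x : ℝ) : EReal)) Filter.atTop (nhds d)) :
    CondC Φ := by
  intro U hU hU_unbdd
  by_contra! hfin
  obtain ⟨g, hg, hgd⟩ := exists_continuous_tendsto_coe_ereal d
  obtain ⟨c, hc⟩ := EReal.coe_injective.exists_ne d
  obtain ⟨f, hf, hfd, hf_not⟩ := exists_continuous_tendsto_inf_principal_compl_not_tendsto
    atTop_le_cocompact hU (frequently_atTop_mem_iff_not_bddAbove.2 hU_unbdd) hg hgd hc
  refine hf_not (h f hf fun a ha => hfd.comp (tendsto_inf.2 ⟨hΦ a ha, tendsto_principal.2 ?_⟩))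
  have ha_compl : ∀ᶠ n in cofinite, a n ∈ Uᶜ := (hfin a ha).eventually_cofinite_notMem
  rwa [Nat.cofinite_eq_atTop] at ha_compl
end

section
/- Let Φ be a family of real sequences each tending to ∞. Assume: (C) for every open set U ⊆ ℝ unbounded above some sequence in Φ has infinitely many terms in U; (1) the family {f_{a} : a ∈ Φ} is bounded, i.e. there exists g : ℕ → ℕ such that for every a ∈ Φ, for all but finitely many i ∈ ℕ and every j ≥ 1, if the interval (i, ∞) is contained in ⋃_{n∈ℕ} (a(n) − 1/j, a(n) + 1/j) then j ≤ g(i); (2) every a ∈ Φ satisfies 0 < a(n+1) − a(n) ≤ a(n) − a(n−1) for all n ≥ 1. Then the cardinality of Φ is at least non(M), the minimum of the cardinalities of non-meagre subsets of ℝ. -/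
/-!
Call a family of functions `ℕ → ℕ` guessing if every `y : ℕ → ℕ` agrees infinitely often with one of
its members. By one half of a theorem of Bartoszyński, a guessing family has at least `non(M)`
members; the sequences in `Φ` turn out to index such a family.

*From `Φ` to a guessing family.* The gaps of `a ∈ Φ` decrease, so a small gap at a term below
`k + 1` would persist and make the balls around the terms of `a` cover `(k + 1, ∞)`. Hence (1)
bounds the number of terms of `a` in `(k, k + 1)` for all large `k` by some `N k` independent
of `a`. Colour `ℝ` by `ℕ` so that every colour occupies an open part of each unit interval. By (C),
for every `y : ℕ → ℕ` there are `a ∈ Φ` and infinitely many `k` for which one of the at most `N k`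
terms of `a` in `(k, k + 1)` has colour `y k`. To get from `N k` values at `k` to a single one, let
`y k` encode a tuple of length `N k`: if the `l`-th value is right, so is the `l`-th coordinate that
it encodes.

*From a guessing family to a non-meagre set.* For a dense open `G` and any `n`, a suitable pattern
of digits on a suitable block `[n, N)` forces a real number into `G`. So it suffices to find few
digit sequences such that, for every assignment of a block and a pattern to each `n`, one of them
follows infinitely many of the patterns. A first guess provides an interval partition of `ℕ`, such
that infinitely many of its intervals contain a block; a second one provides the digits on these
intervals. It is essential that a guessing family can be made to guess infinitely often on any given
infinite set `D`: the `j`-th guess concerns `j + 1` elements of `D` at once, and Hall's theorem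
allocates to each guess an element of its own.
-/

open Filter Set

/-- The family `f` guesses every function `α → β`, in the sense that one of its members agrees with
that function infinitely often. The least size of a guessing family of functions `ℕ → ℕ` is
`non(M)`. -/
def Guesses {ι α β : Type*} (f : ι → α → β) : Prop :=
  ∀ y : α → β, ∃ i, {n | f i n = y n}.Infinite

lemma exists_seq_forall_eqOn_Iio (β : Type*) [Countable β] [Nonempty β] :
    ∃ c : ℕ → ℕ → β, ∀ (y : ℕ → β) (n : ℕ), ∃ k, EqOn (c k) y (Iio n) := by
  obtain ⟨e, he⟩ := exists_surjective_nat (List β)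
  refine ⟨fun k l => (e k).getD l (Classical.arbitrary β), fun y n => ?_⟩
  obtain ⟨k, hk⟩ := he ((List.range n).map y)
  refine ⟨k, fun l (hl : l < n) => ?_⟩
  simp [hk, hl]

lemma exists_mem_Ico_succ_of_tendsto_atTop {α : Type*} [LinearOrder α] [NoMaxOrder α] {f : ℕ → α}
    (hf : Tendsto f atTop atTop) {n : ℕ} {t : α} (ht : f n ≤ t) :
    ∃ m ≥ n, t ∈ Ico (f m) (f (m + 1)) := by
  by_contra! h
  have hle : ∀ m ≥ n, f m ≤ t := fun m hm =>
    Nat.le_induction ht (fun m hm ih => not_lt.1 fun hlt => h m hm ⟨ih, hlt⟩) m hm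
  obtain ⟨m, hm, hnm⟩ := ((hf.eventually_gt_atTop t).and (eventually_ge_atTop n)).exists
  exact (hle m hnm).not_gt hm

/-! ### Guessing families -/

lemma Guesses.comp_equiv {ι α α' β : Type*} {f : ι → α → β} (hf : Guesses f) (e : α' ≃ α) :
    Guesses fun i n => f i (e n) := by
  intro y
  obtain ⟨i, hi⟩ := hf (y ∘ e.symm)
  refine ⟨i, (hi.preimage (f := e) (by simp)).mono fun n hn => ?_⟩
  simpa using hn

lemma exists_guesses_of_slalom {ι : Type*} {F : ι → ℕ → ℕ → ℕ} {N : ℕ → ℕ}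
    (hF : ∀ y : ℕ → ℕ, ∃ i, {k | ∃ l < N k, F i k l = y k}.Infinite) :
    ∃ f : ι → ℕ → ℕ, Guesses f := by
  obtain ⟨c, hc⟩ := exists_seq_forall_eqOn_Iio ℕ
  suffices h : Guesses fun i (p : ℕ × ℕ) => c (F i p.1 p.2) p.2 from
    ⟨_, h.comp_equiv Nat.pairEquiv.symm⟩
  intro y
  choose w hw using fun k => hc (fun l => y (k, l)) (N k)
  obtain ⟨i, hi⟩ := hF w
  refine ⟨i, .of_image Prod.fst (hi.mono ?_)⟩
  rintro k ⟨l, hl, hFl⟩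
  refine ⟨(k, l), ?_, rfl⟩
  simpa [hFl] using hw k hl

lemma exists_injective_mem_of_lt_card {α : Type*} (S : ℕ → Finset α) :
    ∃ m : {j // j < (S j).card} → α, m.Injective ∧ ∀ j, m j ∈ S j.1 := by
  classical
  refine (Finset.all_card_le_biUnion_card_iff_exists_injective
    fun j : {j // j < (S j).card} => S j).1 fun s => ?_
  obtain rfl | hs := s.eq_empty_or_nonempty
  · simp
  obtain ⟨j, hj, hmax⟩ := s.exists_max_image Subtype.val hs
  calc s.card = (s.image Subtype.val).card :=
        (Finset.card_image_of_injective s Subtype.val_injective).symm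
    _ ≤ (Finset.range (j + 1)).card := Finset.card_le_card <| Finset.image_subset_iff.2 fun k hk =>
        Finset.mem_range_succ_iff.2 (hmax k hk)
    _ ≤ (S j).card := by simpa using j.2
    _ ≤ (s.biUnion fun j => S j).card :=
        Finset.card_le_card (Finset.subset_biUnion_of_mem (fun j => S j.1) hj)

lemma exists_fun_mem_of_lt_card {α β : Type*} [DecidableEq α] [Nonempty α] [Nonempty β]
    (L : ℕ → Finset (α × β)) :
    ∃ (h : α → β) (m : ℕ → α), InjOn m {j | j < ((L j).image Prod.fst).card} ∧
      ∀ j, j < ((L j).image Prod.fst).card → (m j, h (m j)) ∈ L j := by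
  obtain ⟨m, hm, hmem⟩ := exists_injective_mem_of_lt_card fun j => (L j).image Prod.fst
  have hval : ∀ j, ∃ b, (m j, b) ∈ L j.1 := fun j => by simpa using hmem j
  choose b hb using hval
  refine ⟨Function.extend m b fun _ => Classical.arbitrary β,
    Function.extend Subtype.val m fun _ => Classical.arbitrary α, ?_, fun j hj => ?_⟩
  · intro j hj k hk hjk
    lift j to {j // j < ((L j).image Prod.fst).card} using hj
    lift k to {j // j < ((L j).image Prod.fst).card} using hk
    simpa [Subtype.val_injective.extend_apply, hm.eq_iff, Subtype.val_inj] using hjk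
  · lift j to {j // j < ((L j).image Prod.fst).card} using hj
    simpa [Subtype.val_injective.extend_apply, hm.extend_apply] using hb j

lemma Guesses.exists_infinite_inter {ι : Type*} {f : ι → ℕ → ℕ} (hf : Guesses f)
    (α β : Type*) [Countable α] [Nonempty α] [Countable β] [Nonempty β] :
    ∃ h : ι → α → β, ∀ (D : Set α), D.Infinite → ∀ y : α → β,
      ∃ i, (D ∩ {a | h i a = y a}).Infinite := by
  classical
  obtain ⟨e, he⟩ := exists_surjective_nat (Finset (α × β))
  choose h m hminj hmem using fun i => exists_fun_mem_of_lt_card fun j => e (f i j)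
  refine ⟨h, fun D hD y => ?_⟩
  choose S hSD hScard using fun j : ℕ => hD.exists_subset_card_eq (j + 1)
  choose w hw using fun j : ℕ => he ((S j).image fun a => (a, y a))
  obtain ⟨i, hi⟩ := hf w
  have hguess : ∀ j, f i j = w j → e (f i j) = (S j).image fun a => (a, y a) := fun j hj => by
    rw [hj, hw]
  have hcard : ∀ j, f i j = w j → j < ((e (f i j)).image Prod.fst).card := fun j hj => by
    simp [hguess j hj, Finset.image_image, Function.comp_def, hScard]
  refine ⟨i, (hi.image ((hminj i).mono hcard)).mono ?_⟩
  rintro _ ⟨j, hj, rfl⟩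
  have hgraph := hmem i j (hcard j hj)
  rw [hguess j hj] at hgraph
  obtain ⟨a, ha, hae⟩ := Finset.mem_image.1 hgraph
  obtain ⟨rfl, hya⟩ := Prod.mk.inj hae
  exact ⟨hSD j ha, hya.symm⟩

/-! ### Following patterns on blocks -/

lemma exists_strictMono_forall_le_succ (u : ℕ → ℕ) :
    ∃ E : ℕ → ℕ, StrictMono E ∧ ∀ m, ∀ n ≤ E m, u n ≤ E (m + 1) := by
  let next : ℕ → ℕ := fun n => n + 1 + partialSups u n
  refine ⟨fun m => next^[m] 0, strictMono_nat_of_lt_succ fun m => ?_, fun m n hn => ?_⟩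
  · grind [Function.iterate_succ_apply']
  · grind [Function.iterate_succ_apply', le_partialSups_of_le u hn]

lemma exists_eq_of_mem_Ico_succ {α : Type*} [Preorder α] {E : ℕ → α} (hE : Monotone E) :
    ∃ index : α → ℕ, ∀ m, ∀ p ∈ Ico (E m) (E (m + 1)), index p = m := by
  refine ⟨fun p => sInf {m | p < E (m + 1)}, fun m p hp => ?_⟩
  refine (Nat.sInf_le hp.2).antisymm (le_csInf ⟨m, hp.2⟩ fun k (hk : p < E (k + 1)) => ?_)
  by_contra! hkm
  exact (hk.trans_le (hE hkm)).not_ge hp.1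

lemma infinite_setOf_exists_block {E u N : ℕ → ℕ} (hE : StrictMono E)
    (huE : ∀ m, ∀ n ≤ E m, u n ≤ E (m + 1)) (hN : Monotone N) (hu : {n | N (N n) ≤ u n}.Infinite) :
    {m | ∃ n, E m ≤ n ∧ N n ≤ E (m + 1)}.Infinite := by
  refine infinite_of_forall_exists_gt fun B => ?_
  obtain ⟨n, hn, hBn⟩ := hu.exists_gt (E (B + 1))
  obtain ⟨m, hBm, hmn, hnm⟩ := exists_mem_Ico_succ_of_tendsto_atTop hE.tendsto_atTop hBn.le
  by_cases hfit : N n ≤ E (m + 1)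
  · exact ⟨m, ⟨n, hmn, hfit⟩, hBm⟩
  · -- The block of `n` is too long, but then the one starting at `E (m + 1)` fits.
    refine ⟨m + 1, ⟨E (m + 1), le_rfl, ?_⟩, by lia⟩
    calc N (E (m + 1)) ≤ N (N n) := hN (not_le.1 hfit).le
      _ ≤ u n := hn
      _ ≤ E (m + 1 + 1) := huE _ _ hnm.le

lemma Guesses.exists_infinite_eqOn_block {ι : Type*} {f : ι → ℕ → ℕ} (hf : Guesses f)
    (β : Type*) [Countable β] [Nonempty β] :
    ∃ x : ι × ι → ℕ → β, ∀ (N : ℕ → ℕ) (z : ℕ → ℕ → β),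
      ∃ q, {n | EqOn (x q) (z n) (Ico n (N n))}.Infinite := by
  obtain ⟨c, hc⟩ := exists_seq_forall_eqOn_Iio β
  obtain ⟨h, hh⟩ := hf.exists_infinite_inter ℕ ℕ
  choose E hE hfE using fun i => exists_strictMono_forall_le_succ (f i)
  choose index hindex using fun i => exists_eq_of_mem_Ico_succ (hE i).monotone
  refine ⟨fun q p => c (h q.2 (index q.1 p)) p, fun N z => ?_⟩
  let M := partialSups N
  obtain ⟨i, hi⟩ := hf fun n => M (M n)
  have hD := infinite_setOf_exists_block (hE i) (hfE i) M.monotone (hi.mono fun n hn => hn.ge)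
  choose! s hs using fun m (hm : ∃ n, E i m ≤ n ∧ M n ≤ E i (m + 1)) => hm
  choose w hw using fun m => hc (z (s m)) (E i (m + 1))
  obtain ⟨i', hi'⟩ := hh _ hD w
  refine ⟨(i, i'), infinite_of_forall_exists_gt fun B => ?_⟩
  obtain ⟨m, ⟨hmD, hmw⟩, hBm⟩ := hi'.exists_gt B
  obtain ⟨hsE, hMs⟩ := hs m hmD
  refine ⟨s m, fun p hp => ?_, hBm.trans_le ((hE i).le_apply.trans hsE)⟩
  have hpE : p < E i (m + 1) := hp.2.trans_le ((le_partialSups N _).trans hMs)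
  calc c (h i' (index i p)) p = c (w m) p := by
        rw [hindex i m p ⟨hsE.trans hp.1, hpE⟩, hmw]
    _ = z (s m) p := hw m hpE

/-! ### Digit sequences and non-meagre sets -/

lemma exists_ofDigits_mem_of_isOpen {b : ℕ} (hb : 1 < b) {V : Set ℝ} (hV : IsOpen V)
    (hne : (V ∩ Icc 0 1).Nonempty) :
    ∃ (N : ℕ) (z : ℕ → Fin b), ∀ x, EqOn x z (Iio N) → Real.ofDigits x ∈ V := by
  obtain ⟨v, hvV, hv⟩ := hne
  obtain ⟨d, -, rfl⟩ := Real.ofDigits_SurjOn hb hv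
  obtain ⟨_, ⟨z, N, rfl⟩, -, hzV⟩ :=
    (PiNat.isTopologicalBasis_cylinders fun _ => Fin b).exists_subset_of_mem_open hvV
      (hV.preimage Real.continuous_ofDigits)
  exact ⟨N, z, fun x hx => hzV fun p hp => hx hp⟩

lemma ofDigits_eq_inv_mul_head_add_tail {b : ℕ} (x : ℕ → Fin b) :
    Real.ofDigits x = (b : ℝ)⁻¹ * (x 0 + Real.ofDigits fun p => x (p + 1)) := by
  simpa [Real.ofDigitsTerm, mul_add, mul_comm] using Real.ofDigits_eq_sum_add_ofDigits x 1

lemma exists_block_forall_ofDigits_mem {b : ℕ} (hb : 1 < b) {G : Set ℝ} (hGo : IsOpen G)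
    (hGd : Dense G) (n : ℕ) :
    ∃ (N : ℕ) (z : ℕ → Fin b), ∀ x, EqOn x z (Ico n N) → Real.ofDigits x ∈ G := by
  induction n generalizing G with
  | zero =>
    obtain ⟨v, hv01, hvG⟩ := hGd.inter_open_nonempty (Ioo 0 1) isOpen_Ioo ⟨1 / 2, by norm_num⟩
    obtain ⟨N, z, hz⟩ :=
      exists_ofDigits_mem_of_isOpen hb hGo ⟨v, hvG, Ioo_subset_Icc_self hv01⟩
    exact ⟨N, z, fun x hx => hz x fun p hp => hx ⟨p.zero_le, hp⟩⟩
  | succ n ih =>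
    have hb0 : (b : ℝ)⁻¹ ≠ 0 := by positivity
    -- `prepend d` maps the number with digits `x` to the one with digits `d, x 0, x 1, …`.
    let prepend (d : Fin b) : ℝ ≃ₜ ℝ :=
      (Homeomorph.addLeft (d : ℝ)).trans (Homeomorph.mulLeft₀ (b : ℝ)⁻¹ hb0)
    have hopen d : IsOpen (prepend d ⁻¹' G) := hGo.preimage (prepend d).continuous
    have hdense d : Dense (prepend d ⁻¹' G) := hGd.preimage (prepend d).isOpenMap
    obtain ⟨N, z, hz⟩ := ih (isOpen_iInter_of_finite hopen) (dense_iInter_of_isOpen hopen hdense)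
    refine ⟨N + 1, fun p => z (p - 1), fun x hx => ?_⟩
    rw [ofDigits_eq_inv_mul_head_add_tail]
    exact mem_iInter.1 (hz (fun p => x (p + 1)) fun p hp => hx ⟨by grind, by grind⟩) (x 0)

lemma exists_antitone_isOpen_dense_of_isMeagre {X : Type*} [TopologicalSpace X] {s : Set X}
    (hs : IsMeagre s) :
    ∃ G : ℕ → Set X, Antitone G ∧ (∀ n, IsOpen (G n)) ∧ (∀ n, Dense (G n)) ∧ ⋂ n, G n ⊆ sᶜ := by
  obtain ⟨S, hSo, hSd, hSc, hSs⟩ := mem_residual_iff.1 hs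
  -- `univ` is inserted because `S` may be empty.
  obtain ⟨U, hU⟩ := (hSc.insert univ).exists_eq_range (insert_nonempty _ _)
  have hUo : ∀ n, IsOpen (U n) := forall_mem_range.1 <| hU ▸
    forall_mem_insert.2 ⟨isOpen_univ, hSo⟩
  have hUd : ∀ n, Dense (U n) := forall_mem_range.1 <| hU ▸
    forall_mem_insert.2 ⟨dense_univ, hSd⟩
  refine ⟨dissipate U, antitone_dissipate, fun n => (finite_Iic n).isOpen_biInter fun k _ => hUo k,
    fun n => ?_, ?_⟩
  · have himage : dissipate U n = ⋂₀ (U '' Iic n) := by simp [dissipate_def, sInter_image]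
    rw [himage]
    exact ((finite_Iic n).image U).dense_sInter (by grind) (by grind)
  · rw [iInter_dissipate, ← sInter_range, ← hU, sInter_insert, univ_inter]
    exact hSs

lemma not_isMeagre_range_ofDigits {ι : Type*} {b : ℕ} (hb : 1 < b) {x : ι → ℕ → Fin b}
    (hx : ∀ (N : ℕ → ℕ) (z : ℕ → ℕ → Fin b),
      ∃ i, {n | EqOn (x i) (z n) (Ico n (N n))}.Infinite) :
    ¬ IsMeagre (range fun i => Real.ofDigits (x i)) := by
  intro hmeagre
  obtain ⟨G, hG, hGo, hGd, hGx⟩ := exists_antitone_isOpen_dense_of_isMeagre hmeagre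
  choose N z hz using fun n => exists_block_forall_ofDigits_mem hb (hGo n) (hGd n) n
  obtain ⟨i, hi⟩ := hx N z
  refine hGx (mem_iInter.2 fun n => ?_) (mem_range_self i)
  obtain ⟨m, hm, hnm⟩ := hi.exists_gt n
  exact hG hnm.le (hz m (x i) hm)

lemma isMeagre_of_countable {X : Type*} [TopologicalSpace X] [T1Space X] [PerfectSpace X]
    {s : Set X} (hs : s.Countable) : IsMeagre s := by
  rw [← biUnion_of_singleton s]
  exact isMeagre_biUnion hs fun x _ => IsNowhereDense.isMeagre (by simp [IsNowhereDense])

theorem nonMeagreCard_le_of_guesses {ι : Type} {f : ι → ℕ → ℕ} (hf : Guesses f) :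
    nonMeagreCard ≤ Cardinal.mk ι := by
  obtain ⟨x, hx⟩ := hf.exists_infinite_eqOn_block (Fin 2)
  have hmeagre := not_isMeagre_range_ofDigits one_lt_two hx
  have : Infinite ι := by
    by_contra! hfin
    exact hmeagre (isMeagre_of_countable (countable_range _))
  calc nonMeagreCard ≤ Cardinal.mk (range fun q => Real.ofDigits (x q)) :=
        csInf_le' ⟨_, hmeagre, rfl⟩
    _ ≤ Cardinal.mk (ι × ι) := Cardinal.mk_range_le
    _ = Cardinal.mk ι * Cardinal.mk ι := Cardinal.mul_def _ _ |>.symm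
    _ = Cardinal.mk ι := Cardinal.mul_eq_self (Cardinal.aleph0_le_mk ι)

/-! ### Sequences with decreasing gaps -/

/-- The least index of a term of `a` that is at least `t`, so that `a (firstIndex a t + l)` is the
`l`-th term of an increasing `a` from `t` on, counted from `0`. It is `0` by convention if there is
no such term. -/
noncomputable def firstIndex (a : ℕ → ℝ) (t : ℝ) : ℕ := sInf {n | t ≤ a n}

lemma firstIndex_le {a : ℕ → ℝ} {t : ℝ} {n : ℕ} (h : t ≤ a n) : firstIndex a t ≤ n :=
  Nat.sInf_le h

lemma le_apply_firstIndex {a : ℕ → ℝ} {t : ℝ} {n : ℕ} (h : t ≤ a n) : t ≤ a (firstIndex a t) :=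
  Nat.sInf_mem (s := {n | t ≤ a n}) ⟨n, h⟩

lemma Cond2.antitone_gap {a : ℕ → ℝ} (ha : Cond2 a) : Antitone fun n => a (n + 1) - a n :=
  antitone_nat_of_succ_le fun n => (ha n).2

lemma Ioi_subset_iUnion_Ioo_of_gap_lt {a : ℕ → ℝ} (ha : Tendsto a atTop atTop) {r : ℝ} {n : ℕ}
    (hr : ∀ m ≥ n, a (m + 1) - a m < r) : Ioi (a n) ⊆ ⋃ m, Ioo (a m - r) (a m + r) := by
  intro t ht
  obtain ⟨m, hm, hmt, htm⟩ := exists_mem_Ico_succ_of_tendsto_atTop ha (le_of_lt ht)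
  have := hr m hm
  exact mem_iUnion.2 ⟨m, by linarith, by linarith⟩

lemma le_gap_of_not_Ioi_subset {a : ℕ → ℝ} (ha : Tendsto a atTop atTop)
    (hanti : Antitone fun n => a (n + 1) - a n) {r t : ℝ}
    (hcov : ¬ Ioi t ⊆ ⋃ m, Ioo (a m - r) (a m + r)) {n : ℕ} (hn : a n ≤ t) :
    r ≤ a (n + 1) - a n := by
  by_contra! hlt
  exact hcov ((Ioi_subset_Ioi hn).trans
    (Ioi_subset_iUnion_Ioo_of_gap_lt ha fun m hm => (hanti hm).trans_lt hlt))

lemma sub_mul_le_sub_of_le_gap {a : ℕ → ℝ} {r : ℝ} {p n : ℕ} (hpn : p ≤ n)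
    (hr : ∀ m < n, r ≤ a (m + 1) - a m) : ((n : ℝ) - p) * r ≤ a n - a p :=
  calc ((n : ℝ) - p) * r = ∑ _m ∈ Finset.Ico p n, r := by simp [Nat.cast_sub hpn]
    _ ≤ ∑ m ∈ Finset.Ico p n, (a (m + 1) - a m) :=
      Finset.sum_le_sum fun m hm => hr m (Finset.mem_Ico.1 hm).2
    _ = a n - a p := Finset.sum_Ico_sub a hpn

lemma sub_firstIndex_mul_le {a : ℕ → ℝ} (ha : Tendsto a atTop atTop)
    (hanti : Antitone fun n => a (n + 1) - a n) {r s t : ℝ}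
    (hcov : ¬ Ioi t ⊆ ⋃ m, Ioo (a m - r) (a m + r)) {n : ℕ} (hsn : s ≤ a n) (hnt : a n ≤ t) :
    ((n : ℝ) - firstIndex a s) * r ≤ a n - s := by
  have hgap : ∀ m < n, r ≤ a (m + 1) - a m := fun m hm =>
    (le_gap_of_not_Ioi_subset ha hanti hcov hnt).trans (hanti hm.le)
  linarith [sub_mul_le_sub_of_le_gap (firstIndex_le hsn) hgap, le_apply_firstIndex hsn]

lemma Cond1.exists_lt_firstIndex_add {Φ : Set (ℕ → ℝ)} (h1 : Cond1 Φ)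
    (hΦ : ∀ a ∈ Φ, TendsToInfty a) (h2 : ∀ a ∈ Φ, Cond2 a) :
    ∃ N : ℕ → ℕ, ∀ a ∈ Φ, ∀ᶠ k : ℕ in atTop, ∀ n,
      a n ∈ Ioo (k : ℝ) (k + 1) → n < firstIndex a k + N k := by
  obtain ⟨g, hg⟩ := h1
  refine ⟨fun k => g (k + 1) + 1, fun a ha => ?_⟩
  filter_upwards [(tendsto_add_atTop_nat 1).eventually (hg a ha)] with k hk n hn
  set j := g (k + 1) + 1
  have hcov : ¬ Ioi ((k + 1 : ℕ) : ℝ) ⊆ ⋃ n, Ioo (a n - 1 / j) (a n + 1 / j) := fun h => by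
    have := hk j (by lia) h
    lia
  have hj0 : (0 : ℝ) < j := by positivity
  have hlt : ((n : ℝ) - firstIndex a k) * (1 / j) < 1 := by
    have := sub_firstIndex_mul_le (hΦ a ha) (h2 a ha).antitone_gap hcov hn.1.le
      (by exact_mod_cast hn.2.le)
    linarith [hn.2]
  rw [mul_one_div, div_lt_one hj0] at hlt
  exact_mod_cast (by linarith : (n : ℝ) < firstIndex a k + j)

/-! ### Capturing functions by the sequences in `Φ` -/

lemma Ioo_add_one_div_subset_Ioo (k c : ℕ) :
    Ioo (k + 1 / ((c : ℝ) + 2)) (k + 1 / ((c : ℝ) + 1)) ⊆ Ioo (k : ℝ) (k + 1) := by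
  refine Ioo_subset_Ioo (le_add_of_nonneg_right (by positivity)) ?_
  gcongr
  exact div_le_self zero_le_one (by simp)

lemma floor_inv_fract_of_mem_Ioo {k c : ℕ} {t : ℝ}
    (ht : t ∈ Ioo (k + 1 / ((c : ℝ) + 2)) (k + 1 / ((c : ℝ) + 1))) :
    ⌊(Int.fract t)⁻¹⌋₊ = c + 1 := by
  obtain ⟨hkt, htk⟩ := Ioo_add_one_div_subset_Ioo k c ht
  have hfract : Int.fract t = t - k :=
    Int.fract_eq_iff.2 ⟨by linarith, by linarith, k, by simp⟩
  have hpos : 0 < t - k := sub_pos.2 hkt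
  rw [hfract, Nat.floor_eq_iff (inv_nonneg.2 hpos.le)]
  push_cast
  constructor
  · rw [le_inv_comm₀ (by positivity) hpos, ← one_div]
    linarith [ht.2]
  · rw [add_assoc, one_add_one_eq_two, inv_lt_comm₀ hpos (by positivity), ← one_div]
    linarith [ht.1]

lemma exists_coloring_unit_intervals :
    ∃ χ : ℝ → ℕ, ∀ k c : ℕ, ∃ V ⊆ Ioo (k : ℝ) (k + 1), IsOpen V ∧ V.Nonempty ∧
      ∀ t ∈ V, χ t = c := by
  refine ⟨fun t => ⌊(Int.fract t)⁻¹⌋₊ - 1, fun k c => ⟨_, Ioo_add_one_div_subset_Ioo k c,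
    isOpen_Ioo, nonempty_Ioo.2 ?_, fun t ht => by simp [floor_inv_fract_of_mem_Ioo ht]⟩⟩
  gcongr
  norm_num

lemma exists_slalom_of_condC {Φ : Set (ℕ → ℝ)} (hΦ : ∀ a ∈ Φ, TendsToInfty a)
    (hC : CondC Φ) (h1 : Cond1 Φ) (h2 : ∀ a ∈ Φ, Cond2 a) :
    ∃ (F : Φ → ℕ → ℕ → ℕ) (N : ℕ → ℕ), ∀ y : ℕ → ℕ,
      ∃ a, {k | ∃ l < N k, F a k l = y k}.Infinite := by
  obtain ⟨N, hN⟩ := h1.exists_lt_firstIndex_add hΦ h2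
  obtain ⟨χ, hχ⟩ := exists_coloring_unit_intervals
  refine ⟨fun a k l => χ (a.1 (firstIndex a k + l)), N, fun y => ?_⟩
  choose V hVsub hVo hVne hVχ using fun k => hχ k (y k)
  have hunb : ¬ BddAbove (⋃ k, V k) := by
    rintro ⟨B, hB⟩
    obtain ⟨k, hk⟩ := exists_nat_gt B
    obtain ⟨t, ht⟩ := hVne k
    exact (hk.trans (hVsub k ht).1).not_ge (hB (mem_iUnion.2 ⟨k, ht⟩))
  obtain ⟨a, haΦ, ha⟩ := hC _ (isOpen_iUnion hVo) hunb
  refine ⟨⟨a, haΦ⟩, infinite_of_forall_exists_gt fun B => ?_⟩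
  obtain ⟨K, hK⟩ := eventually_atTop.1 (hN a haΦ)
  obtain ⟨n, hnV, hn⟩ := ((Nat.frequently_atTop_iff_infinite.2 ha).and_eventually
    ((hΦ a haΦ).eventually_ge_atTop ((max B K : ℕ) + 1 : ℝ))).exists
  obtain ⟨k, hk⟩ := mem_iUnion.1 hnV
  have hBK : max B K < k := by
    have := (hVsub k hk).2
    exact_mod_cast (by linarith : ((max B K : ℕ) : ℝ) < k)
  obtain ⟨l, rfl⟩ := Nat.exists_eq_add_of_le (firstIndex_le (hVsub k hk).1.le)
  have hl := hK k (by lia) _ (hVsub k hk)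
  exact ⟨k, ⟨l, by lia, hVχ k _ hk⟩, by lia⟩

theorem main_theorem (Φ : Set (ℕ → ℝ)) (hΦ : ∀ a ∈ Φ, TendsToInfty a)
    (hC : CondC Φ) (h1 : Cond1 Φ) (h2 : ∀ a ∈ Φ, Cond2 a) :
    nonMeagreCard ≤ Cardinal.mk Φ := by
  obtain ⟨F, N, hF⟩ := exists_slalom_of_condC hΦ hC h1 h2
  obtain ⟨f, hf⟩ := exists_guesses_of_slalom hF
  exact nonMeagreCard_le_of_guesses hf
end

section
/- Let a : ℕ → ℝ be a sequence tending to ∞ satisfying 0 < a(n+1) − a(n) ≤ a(n) − a(n−1) for all n ≥ 1. Let j ≥ 1 and k be natural numbers, and suppose the interval (k, k + 1/j) contains more than one term of the sequence, i.e. there exist indices m ≠ m' with a(m), a(m') ∈ (k, k + 1/j). Then ⋃_{n∈ℕ} (a(n) − 1/j, a(n) + 1/j) ⊇ (k, ∞). -/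
open Filter Set

/-!
If the gaps of a sequence never increase, a gap `≤ 0` would keep the sequence bounded above, so an
unbounded one is strictly increasing. Two terms in `(c, c + ε)` then force a gap `< ε`, and every
later gap is `< ε` as well. Points between `c` and the smaller term are within `ε` of that term;
beyond it the sequence climbs past every bound in steps shorter than `ε`, so it cannot pass a point
without coming within `ε` below it.
-/

theorem bddAbove_range_of_forall_ge_le {β : Type*} [Preorder β] [IsDirectedOrder β] {u : ℕ → β}
    {m : ℕ} {x : β} (hu : ∀ n ≥ m, u n ≤ x) : BddAbove (range u) :=
  (isBoundedUnder_of_eventually_le ((eventually_ge_atTop m).mono hu)).bddAbove_range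

section Gaps

variable {α : Type*} [AddCommGroup α] [LinearOrder α] [IsOrderedAddMonoid α] {a : ℕ → α}

theorem strictMono_of_antitone_gaps (hub : ¬BddAbove (range a))
    (hgap : Antitone fun n => a (n + 1) - a n) : StrictMono a := by
  refine strictMono_nat_of_lt_succ fun n => ?_
  by_contra! hn
  have hnonpos : ∀ i ≥ n, a (i + 1) ≤ a i := fun i hi =>
    sub_nonpos.1 ((hgap hi).trans (sub_nonpos.2 hn))
  have hanti : AntitoneOn a {i | n ≤ i} := antitoneOn_nat_Ici_of_succ_le hnonpos
  exact hub (bddAbove_range_of_forall_ge_le fun _ hi => hanti (le_refl n) hi hi)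

theorem Ioi_subset_iUnion_Ioo_of_gap_lt_s3 {m : ℕ} {ε : α} (hub : ¬BddAbove (range a))
    (hgap : ∀ n ≥ m, a (n + 1) - a n < ε) : Ioi (a m) ⊆ ⋃ n, Ioo (a n) (a n + ε) := by
  intro x hx
  by_contra hmiss
  have hskip : ∀ n, a n < x → a n + ε ≤ x := by simpa using hmiss
  have hlt : ∀ n ≥ m, a n < x := fun n hn => by
    induction n, hn using Nat.le_induction with
    | base => exact hx
    | succ n hn ih => exact (sub_lt_iff_lt_add'.1 (hgap n hn)).trans_le (hskip n ih)
  exact hub (bddAbove_range_of_forall_ge_le fun n hn => (hlt n hn).le)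

theorem observation_general (hub : ¬BddAbove (range a))
    (hgap : Antitone fun n => a (n + 1) - a n) {c ε : α}
    (h : (a ⁻¹' Ioo c (c + ε)).Nontrivial) :
    Ioi c ⊆ ⋃ n, Ioo (a n - ε) (a n + ε) := by
  obtain ⟨m, hm, m', hm', hlt⟩ := h.exists_lt
  have hε : 0 < ε := pos_of_lt_add_right (hm.1.trans hm.2)
  have hsucc : a (m + 1) ≤ a m' := (strictMono_of_antitone_gaps hub hgap).monotone hlt
  have hgap_m : a (m + 1) - a m < ε :=
    sub_lt_iff_lt_add'.2 ((hsucc.trans_lt hm'.2).trans (add_lt_add_left hm.1 ε))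
  intro x hx
  rcases le_or_gt x (a m) with hxm | hxm
  · have hlow : a m - ε < x := (sub_lt_iff_lt_add.2 hm.2).trans hx
    exact mem_iUnion.2 ⟨m, hlow, hxm.trans_lt (lt_add_of_pos_right _ hε)⟩
  · have hcover := Ioi_subset_iUnion_Ioo_of_gap_lt_s3 hub fun n hn => (hgap hn).trans_lt hgap_m
    exact iUnion_mono (fun n => Ioo_subset_Ioo_left (sub_le_self _ hε.le)) (hcover hxm)

end Gaps

theorem observation (a : ℕ → ℝ) (ha : TendsToInfty a) (h2 : Cond2 a)
    (j k : ℕ) (hj : 1 ≤ j)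
    (h : ∃ m m' : ℕ, m ≠ m' ∧ a m ∈ Set.Ioo (k : ℝ) ((k : ℝ) + 1 / j) ∧
      a m' ∈ Set.Ioo (k : ℝ) ((k : ℝ) + 1 / j)) :
    Set.Ioi (k : ℝ) ⊆ ⋃ n : ℕ, Set.Ioo (a n - 1 / j) (a n + 1 / j) := by
  obtain ⟨m, m', hne, hm, hm'⟩ := h
  exact observation_general (not_bddAbove_of_tendsto_atTop ha)
    (antitone_nat_of_succ_le fun n => (h2 n).2) ⟨m, hm, m', hm', hne⟩
end

section
/- Let a : ℕ → ℝ be a sequence tending to ∞ satisfying 0 < a(n+1) − a(n) ≤ a(n) − a(n−1) for all n ≥ 1, and let f : ℕ → ℕ be such that for all but finitely many i ∈ ℕ and every j ≥ 1, if (i, ∞) ⊆ ⋃_{n∈ℕ} (a(n) − 1/j, a(n) + 1/j) then j ≤ f(i). Then there exists m ∈ ℕ such that for every k ≥ m the interval (k, k + 1/(f(k)+1)) contains at most one term of the sequence, i.e. the set { n ∈ ℕ : a(n) ∈ (k, k + 1/(f(k)+1)) } has at most one element. -/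
/-!
As the gaps of `a` never grow, two terms in an interval `(c, c + r)` force every later gap to be
less than `r`. Since `a` increases to `∞`, the `r`-neighbourhoods of the terms from there on cover
`(c, ∞)`. For `c = k` and `r = 1 / (f k + 1)`, the hypothesis on `f` with `j = f k + 1` forbids
such a covering once `k` is large.
-/

open Filter Set

section Covering

variable {M : Type*} [AddCommGroup M] [LinearOrder M] [IsOrderedAddMonoid M] {a : ℕ → M} {c r : M}

theorem Ioi_subset_iUnion_Ioo_of_gap_lt_s4 (hmono : Monotone a) (hunbdd : ¬ BddAbove (range a))
    {p : ℕ} (hp : a p ∈ Ioo c (c + r)) (hgap : ∀ n, p ≤ n → a (n + 1) - a n < r) :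
    Ioi c ⊆ ⋃ n, Ioo (a n - r) (a n + r) := by
  have hr : 0 < r := pos_of_lt_add_right (hp.1.trans hp.2)
  have htail : ¬ BddAbove (a '' Ici p) := fun ⟨b, hb⟩ ↦ hunbdd ⟨b, forall_mem_range.2 fun n ↦
    (hmono (le_max_left n p)).trans (hb (mem_image_of_mem a (le_max_right n p)))⟩
  intro x (hcx : c < x)
  rw [mem_iUnion]
  rcases lt_or_ge x (a p) with hxp | hpx
  · exact ⟨p, (sub_lt_iff_lt_add.2 hp.2).trans hcx, hxp.trans (lt_add_of_pos_right _ hr)⟩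
  · have hx : x ∈ ⋃ n ∈ Ici p, Ico (a n) (a (n + 1)) :=
      (biUnion_Ici_Ico_map_succ (fun n hn ↦ hmono hn) htail).ge hpx
    obtain ⟨n, hpn, hnx, hxn⟩ := mem_iUnion₂.1 hx
    exact ⟨n, (sub_lt_self _ hr).trans_le hnx, hxn.trans (sub_lt_iff_lt_add'.1 (hgap n hpn))⟩

theorem Ioi_subset_iUnion_Ioo_of_nontrivial (hmono : Monotone a) (hunbdd : ¬ BddAbove (range a))
    (hgap : Antitone fun n ↦ a (n + 1) - a n) (hnontriv : {n | a n ∈ Ioo c (c + r)}.Nontrivial) :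
    Ioi c ⊆ ⋃ n, Ioo (a n - r) (a n + r) := by
  obtain ⟨p, hp, q, hq, hpq⟩ := hnontriv.exists_lt
  refine Ioi_subset_iUnion_Ioo_of_gap_lt_s4 hmono hunbdd hp fun n hpn ↦ ?_
  calc a (n + 1) - a n ≤ a (p + 1) - a p := hgap hpn
    _ ≤ a q - a p := sub_le_sub_right (hmono hpq) _
    _ < c + r - c := sub_lt_sub hq.2 hp.1
    _ = r := add_sub_cancel_left c r

end Covering

namespace Cond2

variable {a : ℕ → ℝ}

theorem strictMono (h : Cond2 a) : StrictMono a :=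
  strictMono_nat_of_lt_succ fun n ↦ sub_pos.1 ((h n).1.trans_le (h n).2)

theorem antitone_gap_s4 (h : Cond2 a) : Antitone fun n ↦ a (n + 1) - a n :=
  antitone_nat_of_succ_le fun n ↦ (h n).2

end Cond2

theorem main_lemma (a : ℕ → ℝ) (ha : TendsToInfty a) (h2 : Cond2 a) (f : ℕ → ℕ)
    (hf : ∀ᶠ i : ℕ in Filter.atTop, ∀ j : ℕ, 1 ≤ j →
      Set.Ioi (i : ℝ) ⊆ ⋃ n : ℕ, Set.Ioo (a n - 1 / j) (a n + 1 / j) → j ≤ f i) :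
    ∃ m : ℕ, ∀ k : ℕ, m ≤ k →
      {n : ℕ | a n ∈ Set.Ioo (k : ℝ) ((k : ℝ) + 1 / (f k + 1))}.Subsingleton := by
  obtain ⟨m, hm⟩ := eventually_atTop.1 hf
  refine ⟨m, fun k hk ↦ not_nontrivial_iff.1 fun hnontriv ↦ ?_⟩
  have hcover := Ioi_subset_iUnion_Ioo_of_nontrivial h2.strictMono.monotone
    (not_bddAbove_of_tendsto_atTop ha) h2.antitone_gap_s4 hnontriv
  have hbound : f k + 1 ≤ f k := hm k hk (f k + 1) (Nat.le_add_left 1 _) (by exact_mod_cast hcover)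
  exact Nat.not_succ_le_self _ hbound
end

section
/- Let Φ be a family of real sequences each tending to ∞, and suppose the family {f_a : a ∈ Φ} is unbounded, i.e. there is NO g : ℕ → ℕ such that for every a ∈ Φ, for all but finitely many i ∈ ℕ and every j ≥ 1, (i, ∞) ⊆ ⋃_{n∈ℕ} (a(n) − 1/j, a(n) + 1/j) implies j ≤ g(i). Then Φ satisfies condition (C): for every open set U ⊆ ℝ unbounded above there exists a ∈ Φ with a(n) ∈ U for infinitely many n. -/
/-!
Every `i` has a point `x i > i` in `U`, and `1 / j`-balls around `x i` lie in `U ∩ (i, ∞)` as soon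
as `j ≥ g i`. As `g` does not dominate the family, some `a ∈ Φ` has, for infinitely many `i`, a
`j > g i` such that the `1 / j`-neighbourhoods of its terms cover `(i, ∞)`. One of them contains
`x i`, so its centre is a term of `a` in `U` above `i`.
-/

open Filter Set

open scoped Topology

lemma eventually_ball_one_div_subset {X : Type*} [PseudoMetricSpace X] {s : Set X} {x : X}
    (hs : s ∈ 𝓝 x) : ∀ᶠ j : ℕ in atTop, Metric.ball x (1 / j) ⊆ s := by
  obtain ⟨ε, hε, hball⟩ := Metric.mem_nhds_iff.1 hs
  filter_upwards [tendsto_one_div_atTop_nhds_zero_nat.eventually_lt_const hε] with j hj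
  exact (Metric.ball_subset_ball hj.le).trans hball

lemma not_bddAbove_of_frequently_exists_gt {ι α : Type*} [Preorder α] {l : Filter ι} {f : ι → α}
    (hf : Tendsto f l atTop) {s : Set α} (h : ∃ᶠ i in l, ∃ y ∈ s, f i < y) : ¬ BddAbove s := by
  rintro ⟨b, hb⟩
  obtain ⟨i, ⟨y, hys, hiy⟩, hbi⟩ := (h.and_eventually (hf.eventually_ge_atTop b)).exists
  exact ((hb hys).trans hbi).not_gt hiy

lemma infinite_preimage_of_not_bddAbove_range_inter {ι α : Type*} [Preorder α]
    [IsDirectedOrder α] [Nonempty α] {a : ι → α} {s : Set α} (h : ¬ BddAbove (range a ∩ s)) :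
    (a ⁻¹' s).Infinite := by
  rw [← image_preimage_eq_range_inter] at h
  exact (infinite_of_not_bddAbove h).of_image a

lemma exists_frequently_lt_of_not_cond1 {Φ : Set (ℕ → ℝ)} (h : ¬ Cond1 Φ) (g : ℕ → ℕ) :
    ∃ a ∈ Φ, ∃ᶠ i : ℕ in atTop, ∃ j : ℕ, g i < j ∧
      Ioi (i : ℝ) ⊆ ⋃ n : ℕ, Ioo (a n - 1 / j) (a n + 1 / j) := by
  by_contra! hbdd
  refine h ⟨g, fun a ha => ?_⟩
  filter_upwards [hbdd a ha] with i hi j _ hcov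
  exact not_lt.1 fun hj => hi j hj hcov

theorem remark1_unbounded_implies_C_general {Φ : Set (ℕ → ℝ)} (hunb : ¬ Cond1 Φ) {U : Set ℝ}
    (hU : IsOpen U) (hub : ¬ BddAbove U) : ∃ a ∈ Φ, ¬ BddAbove (range a ∩ U) := by
  have hball (i : ℕ) :
      ∃ x > (i : ℝ), ∃ k : ℕ, ∀ j ≥ k, Metric.ball x (1 / (j : ℝ)) ⊆ U ∩ Ioi (i : ℝ) := by
    obtain ⟨x, hxU, hix⟩ := not_bddAbove_iff.1 hub i
    have hx : U ∩ Ioi (i : ℝ) ∈ 𝓝 x := (hU.inter isOpen_Ioi).mem_nhds ⟨hxU, hix⟩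
    exact ⟨x, hix, eventually_atTop.1 (eventually_ball_one_div_subset hx)⟩
  choose x hix g hg using hball
  obtain ⟨a, ha, hfreq⟩ := exists_frequently_lt_of_not_cond1 hunb g
  refine ⟨a, ha, not_bddAbove_of_frequently_exists_gt tendsto_natCast_atTop_atTop
    (hfreq.mono ?_)⟩
  rintro i ⟨j, hj, hcov⟩
  obtain ⟨n, hn⟩ := mem_iUnion.1 (hcov (hix i))
  rw [← Real.ball_eq_Ioo, Metric.mem_ball_comm] at hn
  obtain ⟨hnU, hin⟩ := hg i j hj.le hn
  exact ⟨a n, ⟨mem_range_self n, hnU⟩, hin⟩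

theorem remark1_unbounded_implies_C (Φ : Set (ℕ → ℝ))
    (hΦ : ∀ a ∈ Φ, TendsToInfty a) (hunb : ¬ Cond1 Φ) :
    CondC Φ := by
  intro U hU hub
  obtain ⟨a, ha, h⟩ := remark1_unbounded_implies_C_general hunb hU hub
  exact ⟨a, ha, infinite_preimage_of_not_bddAbove_range_inter h⟩
end

section
/- The bounding number b equals the smallest cardinality of a family Φ of real sequences converging to ∞ which satisfies condition (C). That is, the infimum of the cardinals card Φ over all families Φ of sequences tending to ∞ satisfying condition (C) equals b. -/
open Filter Set

/-!
Each kind of family is translated into the other by a map applied to its members, so that the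
cardinality does not increase.

From `f : ℕ → ℕ` one gets a sequence tending to `∞` that beyond `i` moves in steps of length at
most `1 / (f i + 1)`. An open set `U` unbounded above contains an interval of some length
`1 / (g i + 1)` beyond `i + 1` for every `i`, and the sequence of `f` cannot jump over the `i`-th
interval when `g i < f i`. Hence `f ≰* g` makes this sequence meet `U` infinitely often.

Conversely, a sequence `a` tending to `∞` misses `(k, k + 1 / (m + 1))` for large `m`; let `h k` be
the least such `m`. If `a` meets `⋃ k, (k, k + 1 / (g k + 1))` infinitely often, then `g k < h k`
for infinitely many `k`, that is, `h ≰* g`.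
-/

open scoped Cardinal

universe u

/-- Boundedness of a family of functions with respect to `≤*`, where `f ≤* g` means that
`g i < f i` for only finitely many `i`. -/
def BoundedModFinite {ι α : Type*} [LT α] (F : Set (ι → α)) : Prop :=
  ∃ g : ι → α, ∀ f ∈ F, {i | g i < f i}.Finite

lemma not_boundedModFinite_univ {ι α : Type*} [Infinite ι] [LT α] [NoMaxOrder α] :
    ¬ BoundedModFinite (univ : Set (ι → α)) := by
  rintro ⟨g, hg⟩
  choose f hf using fun i => exists_gt (g i)
  exact infinite_univ ((hg f (mem_univ f)).subset fun i _ => hf i)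

lemma sInf_mk_le_sInf_mk_of_image {α β : Type u} {P : Set α → Prop} {Q : Set β → Prop}
    (e : β → α) (hQ : ∃ T, Q T) (hPQ : ∀ T, Q T → P (e '' T)) :
    sInf {c : Cardinal | ∃ S, P S ∧ c = #S} ≤ sInf {c : Cardinal | ∃ T, Q T ∧ c = #T} := by
  obtain ⟨T₀, hT₀⟩ := hQ
  refine le_csInf ⟨#T₀, T₀, hT₀, rfl⟩ ?_
  rintro _ ⟨T, hT, rfl⟩
  calc
    sInf {c : Cardinal | ∃ S, P S ∧ c = #S} ≤ #(e '' T) := csInf_le' ⟨e '' T, hPQ T hT, rfl⟩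
    _ ≤ #T := Cardinal.mk_image_le

lemma infinite_setOf_mem_iff_forall_exists_lt {α : Type*} [LinearOrder α] [Nonempty α]
    [NoMaxOrder α] {a : ℕ → α} (ha : Tendsto a atTop atTop) {U : Set α} :
    {n | a n ∈ U}.Infinite ↔ ∀ B, ∃ n, a n ∈ U ∧ B < a n := by
  refine ⟨fun hinf B => ?_, fun h hfin => ?_⟩
  · exact ((Nat.frequently_atTop_iff_infinite.mpr hinf).and_eventually
      (ha.eventually_gt_atTop B)).exists
  · obtain ⟨B, hB⟩ := (hfin.image a).bddAbove
    obtain ⟨n, hnU, hn⟩ := h B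
    exact hn.not_ge (hB (mem_image_of_mem a hnU))

lemma exists_mem_Ioo_of_succ_lt {α : Type*} [LinearOrder α] {a : ℕ → α} {x y : α}
    (h_zero : a 0 ≤ x) (h_succ : ∀ n, a n ≤ x → a (n + 1) < y) (h_exceeds : ∃ n, x < a n) :
    ∃ n, a n ∈ Ioo x y := by
  by_contra! h_avoid
  have h_le : ∀ n, a n ≤ x := by
    intro n
    induction n with
    | zero => exact h_zero
    | succ n ih => exact not_lt.mp fun hx => h_avoid (n + 1) ⟨hx, h_succ n ih⟩
  obtain ⟨n, hn⟩ := h_exceeds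
  exact hn.not_ge (h_le n)

lemma tendsto_iterate_add_atTop {G : Type*} [AddCommGroup G] [LinearOrder G]
    [IsOrderedAddMonoid G] [Archimedean G] {δ : G → G} (δ_pos : ∀ x, 0 < δ x)
    (δ_anti : Antitone δ) (x₀ : G) :
    Tendsto (fun n => (fun x => x + δ x)^[n] x₀) atTop atTop := by
  set a : ℕ → G := fun n => (fun x => x + δ x)^[n] x₀
  have a_succ (n : ℕ) : a (n + 1) = a n + δ (a n) := Function.iterate_succ_apply' _ n x₀
  have a_mono : Monotone a := monotone_nat_of_le_succ fun n => by
    rw [a_succ]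
    exact le_add_of_nonneg_right (δ_pos _).le
  refine a_mono.tendsto_atTop_atTop fun B => ?_
  by_contra! h_lt
  have h_linear (n : ℕ) : x₀ + n • δ B ≤ a n := by
    induction n with
    | zero => simp [a]
    | succ n ih =>
      rw [succ_nsmul, ← add_assoc, a_succ]
      exact add_le_add ih (δ_anti (h_lt n).le)
  obtain ⟨n, hn⟩ := Archimedean.arch (B - x₀) (δ_pos B)
  exact (h_lt n).not_ge ((sub_le_iff_le_add'.mp hn).trans (h_linear n))

lemma exists_forall_notMem_Ioo {α : Type*} [LinearOrder α] [NoMaxOrder α] {a : ℕ → α}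
    (ha : Tendsto a atTop atTop) (c : α) : ∃ b > c, ∀ n, a n ∉ Ioo c b := by
  rw [← Nat.cofinite_eq_atTop] at ha
  obtain ⟨n₀, hn₀, h_min⟩ := ha.exists_within_forall_le (s := {n | c < a n})
    (ha.eventually_gt_atTop c).exists
  exact ⟨a n₀, hn₀, fun n hn => (h_min n hn.1).not_gt hn.2⟩

section OrderedField

variable {K : Type*} [Field K] [LinearOrder K] [IsStrictOrderedRing K]

lemma one_div_natCast_add_one_le_one (m : ℕ) : 1 / ((m : K) + 1) ≤ 1 := by
  simpa using Nat.one_div_le_one_div (α := K) (Nat.zero_le m)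

lemma exists_Ioo_subset_of_isOpen_of_not_bddAbove [Archimedean K] [TopologicalSpace K]
    [OrderTopology K] {U : Set K} (hU : IsOpen U) (hU_unbdd : ¬ BddAbove U) (B : K) :
    ∃ x, B < x ∧ ∃ m : ℕ, Ioo x (x + 1 / ((m : K) + 1)) ⊆ U := by
  obtain ⟨x, hxU, hBx⟩ := not_bddAbove_iff.mp hU_unbdd B
  obtain ⟨y, hxy, hyU⟩ := exists_Ico_subset_of_mem_nhds (hU.mem_nhds hxU) (exists_gt x)
  obtain ⟨m, hm⟩ := exists_nat_one_div_lt (sub_pos.mpr hxy)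
  refine ⟨x, hBx, m, Ioo_subset_Ico_self.trans ((Ico_subset_Ico_right ?_).trans hyU)⟩
  exact (lt_sub_iff_add_lt'.mp hm).le

lemma not_bddAbove_iUnion_Ioo_natCast [Archimedean K] {ε : ℕ → K} (hε : ∀ k, 0 < ε k) :
    ¬ BddAbove (⋃ k : ℕ, Ioo (k : K) (k + ε k)) := by
  refine not_bddAbove_iff.mpr fun B => ?_
  obtain ⟨k, hk⟩ := exists_nat_gt B
  obtain ⟨y, hy⟩ := exists_between (lt_add_of_pos_right (k : K) (hε k))
  exact ⟨y, mem_iUnion.mpr ⟨k, hy⟩, hk.trans hy.1⟩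

end OrderedField

section GridSeq

variable {f : ℕ → ℕ}

/-- The step that the sequence attached to `f` makes from the point `x`. Taking the maximum of `f`
on `{0, …, ⌊x⌋}` rather than its value at `⌊x⌋` makes the steps nonincreasing in `x`. -/
noncomputable def mesh (f : ℕ → ℕ) (x : ℝ) : ℝ := 1 / ((partialSups f ⌊x⌋₊ : ℕ) + 1)

lemma mesh_pos (x : ℝ) : 0 < mesh f x := Nat.one_div_pos_of_nat

lemma mesh_le_one (x : ℝ) : mesh f x ≤ 1 := one_div_natCast_add_one_le_one _

lemma mesh_antitone : Antitone (mesh f) := fun _ _ hxy =>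
  Nat.one_div_le_one_div ((partialSups f).monotone (Nat.floor_mono hxy))

lemma mesh_le_of_natCast_le {i : ℕ} {x : ℝ} (hx : (i : ℝ) ≤ x) :
    mesh f x ≤ 1 / ((f i : ℝ) + 1) :=
  Nat.one_div_le_one_div (le_partialSups_of_le f (Nat.le_floor hx))

/-- The sequence attached to `f : ℕ → ℕ`: it starts at `0`, and a term `x` is followed by
`x + mesh f x`. -/
noncomputable def gridSeq (f : ℕ → ℕ) (n : ℕ) : ℝ := (fun x => x + mesh f x)^[n] 0

lemma gridSeq_succ (n : ℕ) : gridSeq f (n + 1) = gridSeq f n + mesh f (gridSeq f n) :=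
  Function.iterate_succ_apply' _ n 0

lemma tendsToInfty_gridSeq (f : ℕ → ℕ) : TendsToInfty (gridSeq f) :=
  tendsto_iterate_add_atTop mesh_pos mesh_antitone 0

lemma exists_gridSeq_mem_Ioo {i : ℕ} {x y : ℝ} (hx : (i : ℝ) + 1 < x)
    (hxy : x + 1 / ((f i : ℝ) + 1) < y) : ∃ n, gridSeq f n ∈ Ioo x y := by
  refine exists_mem_Ioo_of_succ_lt ?_ (fun n hn => ?_)
    ((tendsToInfty_gridSeq f).eventually_gt_atTop x).exists
  · exact (by positivity : (0 : ℝ) ≤ i + 1).trans hx.le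
  · rw [gridSeq_succ]
    rcases le_total (i : ℝ) (gridSeq f n) with hi | hi
    · exact (add_le_add hn (mesh_le_of_natCast_le hi)).trans_lt hxy
    · calc
        gridSeq f n + mesh f (gridSeq f n) ≤ i + 1 := add_le_add hi (mesh_le_one _)
        _ < x := hx
        _ < x + 1 / ((f i : ℝ) + 1) := lt_add_of_pos_right x Nat.one_div_pos_of_nat
        _ < y := hxy

theorem condC_image_gridSeq {F : Set (ℕ → ℕ)} (hF : ¬ BoundedModFinite F) :
    CondC (gridSeq '' F) := by
  intro U hU hU_unbdd
  choose x hx g hg using fun i : ℕ =>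
    exists_Ioo_subset_of_isOpen_of_not_bddAbove hU hU_unbdd ((i : ℝ) + 1)
  obtain ⟨f, hfF, hfg⟩ : ∃ f ∈ F, {i | g i < f i}.Infinite := by
    by_contra! h
    exact hF ⟨g, h⟩
  refine ⟨gridSeq f, mem_image_of_mem gridSeq hfF, ?_⟩
  rw [infinite_setOf_mem_iff_forall_exists_lt (tendsToInfty_gridSeq f)]
  intro B
  obtain ⟨N, hBN⟩ := exists_nat_gt B
  obtain ⟨i, hi, hNi⟩ := hfg.exists_gt N
  have hNi' : (N : ℝ) < i := Nat.cast_lt.mpr hNi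
  have h_step : x i + 1 / ((f i : ℝ) + 1) < x i + 1 / ((g i : ℝ) + 1) := by
    gcongr
    exact hi
  obtain ⟨n, hn⟩ := exists_gridSeq_mem_Ioo (hx i) h_step
  exact ⟨n, hg i hn, by linarith [hx i, hn.1]⟩

end GridSeq

section GapFun

variable {a : ℕ → ℝ}

/-- The function attached to a sequence `a` tending to `∞`: its value at `k` is the least `m` such
that `a` misses the interval `(k, k + 1 / (m + 1))`. It is `0` if there is no such `m`. -/
noncomputable def gapFun (a : ℕ → ℝ) (k : ℕ) : ℕ :=
  sInf {m : ℕ | ∀ n, a n ∉ Ioo (k : ℝ) (k + 1 / ((m : ℝ) + 1))}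

lemma notMem_Ioo_gapFun (ha : TendsToInfty a) (k n : ℕ) :
    a n ∉ Ioo (k : ℝ) (k + 1 / ((gapFun a k : ℝ) + 1)) := by
  obtain ⟨b, hkb, hb⟩ := exists_forall_notMem_Ioo ha (k : ℝ)
  obtain ⟨m, hm⟩ := exists_nat_one_div_lt (sub_pos.mpr hkb)
  have hm_gap : ∀ n, a n ∉ Ioo (k : ℝ) (k + 1 / ((m : ℝ) + 1)) := fun n hn =>
    hb n ⟨hn.1, hn.2.trans (lt_sub_iff_add_lt'.mp hm)⟩
  exact Nat.sInf_mem (s := {m : ℕ | ∀ n, a n ∉ Ioo (k : ℝ) (k + 1 / ((m : ℝ) + 1))})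
    ⟨m, hm_gap⟩ n

lemma lt_gapFun_of_mem_Ioo (ha : TendsToInfty a) {k m n : ℕ}
    (hn : a n ∈ Ioo (k : ℝ) (k + 1 / ((m : ℝ) + 1))) : m < gapFun a k := by
  by_contra! h_le
  refine notMem_Ioo_gapFun ha k n ⟨hn.1, hn.2.trans_le ?_⟩
  gcongr

theorem not_boundedModFinite_image_gapFun {Φ : Set (ℕ → ℝ)} (hΦ : ∀ a ∈ Φ, TendsToInfty a)
    (hC : CondC Φ) : ¬ BoundedModFinite (gapFun '' Φ) := by
  rintro ⟨g, hg⟩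
  obtain ⟨a, haΦ, h_inf⟩ := hC (⋃ k : ℕ, Ioo (k : ℝ) (k + 1 / ((g k : ℝ) + 1)))
    (isOpen_iUnion fun _ => isOpen_Ioo)
    (not_bddAbove_iUnion_Ioo_natCast fun _ => Nat.one_div_pos_of_nat)
  obtain ⟨K, hK⟩ := (hg (gapFun a) (mem_image_of_mem gapFun haΦ)).bddAbove
  obtain ⟨n, hnU, hKn⟩ :=
    (infinite_setOf_mem_iff_forall_exists_lt (hΦ a haΦ)).mp h_inf ((K : ℝ) + 1)
  obtain ⟨k, hk⟩ := mem_iUnion.mp hnU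
  have hkK : (k : ℝ) ≤ K := Nat.cast_le.mpr (hK (lt_gapFun_of_mem_Ioo (hΦ a haΦ) hk))
  linarith [hk.2, one_div_natCast_add_one_le_one (K := ℝ) (g k)]

end GapFun

theorem remark1_b_eq :
    boundingNumber = sInf {c : Cardinal | ∃ Φ : Set (ℕ → ℝ),
      (∀ a ∈ Φ, TendsToInfty a) ∧ CondC Φ ∧ c = Cardinal.mk Φ} := by
  have of_unbounded (F : Set (ℕ → ℕ)) (hF : ¬ BoundedModFinite F) :
      (∀ a ∈ gridSeq '' F, TendsToInfty a) ∧ CondC (gridSeq '' F) :=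
    ⟨forall_mem_image.mpr fun f _ => tendsToInfty_gridSeq f, condC_image_gridSeq hF⟩
  simp only [boundingNumber, ← and_assoc]
  apply le_antisymm
  · exact sInf_mk_le_sInf_mk_of_image gapFun ⟨_, of_unbounded univ not_boundedModFinite_univ⟩
      fun _ hΦ => not_boundedModFinite_image_gapFun hΦ.1 hΦ.2
  · exact sInf_mk_le_sInf_mk_of_image gridSeq ⟨univ, not_boundedModFinite_univ⟩ of_unbounded
end

section
/- There exists a family Φ of real sequences each tending to ∞ such that: card Φ = b; Φ satisfies condition (C); every a ∈ Φ satisfies 0 < a(n+1) − a(n) ≤ a(n) − a(n−1) for all n ≥ 1; and the family {f_a : a ∈ Φ} is unbounded, i.e. there is no g : ℕ → ℕ such that for every a ∈ Φ, for all but finitely many i ∈ ℕ and every j ≥ 1, (i, ∞) ⊆ ⋃_{n∈ℕ} (a(n) − 1/j, a(n) + 1/j) implies j ≤ g(i). -/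
/-!
For sequences `a` tending to `∞` the maximum defining `f_a` exists, and `Cond1` says that the
functions `f_a` form a `≤*`-bounded family. Hence a family violating `Cond1` has at least `b`
members. It also satisfies condition (C): an open set `U` unbounded above contains, for each `i`, an
interval of radius `1 / g i` centred in `(i, ∞)`, and a sequence with `f_a(i) > g i` has a term in
it.

It is therefore enough to find for every `f : ℕ → ℕ` a sequence with nonincreasing gaps and
`f ≤ f_a`, and to apply this to an unbounded family of cardinality `b`. Such a sequence advances
from `x` by the reciprocal of a monotone function majorizing `f`, evaluated at `⌈x⌉`.
-/

open Filter Set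

/-- `≤*`-boundedness of a family of functions `ℕ → ℕ`, in the form in which it enters
`boundingNumber`. -/
def EventuallyDominated (F : Set (ℕ → ℕ)) : Prop :=
  ∃ g : ℕ → ℕ, ∀ f ∈ F, {i : ℕ | g i < f i}.Finite

/-- The half-line `(x, ∞)` is covered by the open `ε`-neighbourhoods of the terms of `a`. -/
def TailCover (a : ℕ → ℝ) (x ε : ℝ) : Prop :=
  Ioi x ⊆ ⋃ n : ℕ, Ioo (a n - ε) (a n + ε)

/-- The function `f_a`. In `ℕ` the supremum of the empty set is `0`, as in the convention for `f_a`;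
it is also `0` for an unbounded set, which does not occur when `a` tends to `∞`
(`TendsToInfty.bddAbove_tailCover`). -/
noncomputable def coverIndex (a : ℕ → ℝ) (i : ℕ) : ℕ :=
  sSup {j : ℕ | 1 ≤ j ∧ TailCover a i (1 / j)}

/-- The sequence that starts at `x₀` and advances from a point `x` to `x + d x`. -/
def stepSeq (d : ℝ → ℝ) (x₀ : ℝ) (n : ℕ) : ℝ :=
  (fun x => x + d x)^[n] x₀

theorem EventuallyDominated.of_forall_exists_le {F G : Set (ℕ → ℕ)} (hG : EventuallyDominated G)
    (h : ∀ f ∈ F, ∃ f' ∈ G, f ≤ f') : EventuallyDominated F := by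
  obtain ⟨g, hg⟩ := hG
  refine ⟨g, fun f hf => ?_⟩
  obtain ⟨f', hf', hle⟩ := h f hf
  exact (hg f' hf').subset fun i hi => lt_of_lt_of_le hi (hle i)

theorem not_eventuallyDominated_univ : ¬ EventuallyDominated univ := by
  rintro ⟨g, hg⟩
  have hfin := hg (fun i => g i + 1) (mem_univ _)
  exact infinite_univ (hfin.subset fun i _ => Nat.lt_succ_self (g i))

theorem boundingNumber_le_mk {F : Set (ℕ → ℕ)} (hF : ¬ EventuallyDominated F) :
    boundingNumber ≤ Cardinal.mk F :=
  csInf_le' ⟨F, hF, rfl⟩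

theorem exists_not_eventuallyDominated_mk_eq_boundingNumber :
    ∃ F : Set (ℕ → ℕ), ¬ EventuallyDominated F ∧ Cardinal.mk F = boundingNumber := by
  have hne : {c : Cardinal | ∃ F : Set (ℕ → ℕ), ¬ EventuallyDominated F ∧
      c = Cardinal.mk F}.Nonempty := ⟨_, univ, not_eventuallyDominated_univ, rfl⟩
  obtain ⟨F, hF, hcard⟩ := csInf_mem hne
  exact ⟨F, hF, hcard.symm⟩

theorem TailCover.mono {a : ℕ → ℝ} {x ε δ : ℝ} (h : TailCover a x ε) (hεδ : ε ≤ δ) :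
    TailCover a x δ :=
  h.trans (iUnion_mono fun _ => Ioo_subset_Ioo (by gcongr) (by gcongr))

theorem tailCover_of_gap_le {a : ℕ → ℝ} (ha : Monotone a) (htop : TendsToInfty a) {x ε : ℝ}
    (hε : 0 < ε) (hx : a 0 ≤ x) (hgap : ∀ n, x < a (n + 1) → a (n + 1) - a n ≤ ε) :
    TailCover a x ε := by
  intro y (hy : x < y)
  have hcover : ⋃ n, Ico (a n) (a (n + 1)) = Ici (a 0) :=
    iUnion_Ico_map_succ_eq_Ici (fun n => ha (Nat.zero_le n)) (not_bddAbove_of_tendsto_atTop htop)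
  have hymem : y ∈ ⋃ n, Ico (a n) (a (n + 1)) := hcover ▸ hx.trans hy.le
  obtain ⟨n, hle, hlt⟩ := mem_iUnion.1 hymem
  have hgapn := hgap n (hy.trans hlt)
  exact mem_iUnion.2 ⟨n, by linarith, by linarith⟩

theorem TendsToInfty.isClosed_range {a : ℕ → ℝ} (ha : TendsToInfty a) : IsClosed (range a) := by
  have hcocompact : Tendsto a (cocompact ℕ) (cocompact ℝ) := by
    rw [cocompact_eq_cofinite, Nat.cofinite_eq_atTop, cocompact_eq_atBot_atTop]
    exact ha.mono_right le_sup_right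
  exact (isProperMap_iff_tendsto_cocompact.2
    ⟨continuous_of_discreteTopology, hcocompact⟩).isClosedMap.isClosed_range

theorem TendsToInfty.exists_pos_not_tailCover {a : ℕ → ℝ} (ha : TendsToInfty a) (x : ℝ) :
    ∃ ε > 0, ¬ TailCover a x ε := by
  obtain ⟨y, hy, hxy⟩ := ((countable_range a).dense_compl ℝ).exists_gt x
  obtain ⟨ε, hε, hball⟩ := Metric.isOpen_iff.1 ha.isClosed_range.isOpen_compl y hy
  refine ⟨ε, hε, fun hcover => ?_⟩
  obtain ⟨n, hn⟩ := mem_iUnion.1 (hcover hxy)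
  rw [← Real.ball_eq_Ioo, Metric.mem_ball'] at hn
  exact hball hn (mem_range_self n)

theorem TendsToInfty.bddAbove_tailCover {a : ℕ → ℝ} (ha : TendsToInfty a) (x : ℝ) :
    BddAbove {j : ℕ | 1 ≤ j ∧ TailCover a x (1 / j)} := by
  obtain ⟨ε, hε, hnot⟩ := ha.exists_pos_not_tailCover x
  obtain ⟨N, hN⟩ := exists_nat_one_div_lt hε
  refine ⟨N, fun j ⟨_, hcover⟩ => ?_⟩
  by_contra! hNj
  have hjε : 1 / (j : ℝ) ≤ ε := calc
    1 / (j : ℝ) ≤ 1 / (N + 1) := by gcongr; exact_mod_cast hNj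
    _ ≤ ε := hN.le
  exact hnot (hcover.mono hjε)

theorem coverIndex_le_iff {a : ℕ → ℝ} (ha : TendsToInfty a) {i m : ℕ} :
    coverIndex a i ≤ m ↔ ∀ j : ℕ, 1 ≤ j → TailCover a i (1 / j) → j ≤ m :=
  (csSup_le_iff' (ha.bddAbove_tailCover i)).trans (by simp only [mem_ofPred_eq, and_imp])

theorem le_coverIndex {a : ℕ → ℝ} (ha : TendsToInfty a) {i j : ℕ}
    (hj : 1 ≤ j) (h : TailCover a i (1 / j)) : j ≤ coverIndex a i :=
  (coverIndex_le_iff ha).1 le_rfl j hj h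

theorem cond1_iff_eventuallyDominated {Φ : Set (ℕ → ℝ)} (hΦ : ∀ a ∈ Φ, TendsToInfty a) :
    Cond1 Φ ↔ EventuallyDominated (coverIndex '' Φ) := by
  unfold EventuallyDominated
  simp only [forall_mem_image, ← not_le]
  refine exists_congr fun g => forall₂_congr fun a ha => ?_
  rw [← eventually_cofinite, Nat.cofinite_eq_atTop]
  exact eventually_congr (.of_forall fun i => (coverIndex_le_iff (hΦ a ha)).symm)

theorem boundingNumber_le_mk_of_not_cond1 {Φ : Set (ℕ → ℝ)} (hΦ : ∀ a ∈ Φ, TendsToInfty a)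
    (h : ¬ Cond1 Φ) : boundingNumber ≤ Cardinal.mk Φ :=
  (boundingNumber_le_mk (mt (cond1_iff_eventuallyDominated hΦ).2 h)).trans Cardinal.mk_image_le

theorem exists_Ioo_one_div_subset {U : Set ℝ} (hU : IsOpen U) (hunb : ¬ BddAbove U) (x : ℝ) :
    ∃ j : ℕ, 1 ≤ j ∧ ∃ y > x, Ioo (y - 1 / j) (y + 1 / j) ⊆ U := by
  obtain ⟨y, hyU, hxy⟩ := not_bddAbove_iff.1 hunb x
  obtain ⟨ε, hε, hball⟩ := Metric.isOpen_iff.1 hU y hyU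
  obtain ⟨n, hn⟩ := exists_nat_one_div_lt hε
  refine ⟨n + 1, Nat.le_add_left 1 n, y, hxy, ?_⟩
  rw [← Real.ball_eq_Ioo]
  push_cast
  exact (Metric.ball_subset_ball hn.le).trans hball

theorem condC_of_not_cond1 {Φ : Set (ℕ → ℝ)} (h : ¬ Cond1 Φ) : CondC Φ := by
  intro U hU hunb
  choose g hg y hiy hgU using fun i : ℕ => exists_Ioo_one_div_subset hU hunb i
  unfold Cond1 at h
  push Not at h
  obtain ⟨a, ha, hfreq⟩ := h g
  refine ⟨a, ha, Infinite.of_image a (infinite_of_not_bddAbove (not_bddAbove_iff.2 fun M => ?_))⟩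
  obtain ⟨i, hMi, j, -, hcover, hgj⟩ := frequently_atTop.1 hfreq (⌈M⌉₊ + 1)
  obtain ⟨n, hn⟩ := mem_iUnion.1 (hcover (hiy i))
  have hgi : (1 : ℝ) ≤ g i := by exact_mod_cast hg i
  have hjg : 1 / (j : ℝ) ≤ 1 / g i := by gcongr
  have hg_one : 1 / (g i : ℝ) ≤ 1 := (div_le_one (by linarith)).2 hgi
  have hMi' : M + 1 ≤ i := calc
    M + 1 ≤ ⌈M⌉₊ + 1 := by gcongr; exact Nat.le_ceil M
    _ ≤ i := by exact_mod_cast hMi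
  refine ⟨a n, ⟨n, hgU i ⟨?_, ?_⟩, rfl⟩, ?_⟩
  · linarith [hn.2]
  · linarith [hn.1]
  · linarith [hn.2, hiy i]

section StepSeq

variable (d : ℝ → ℝ) (x₀ : ℝ)

theorem stepSeq_succ (n : ℕ) :
    stepSeq d x₀ (n + 1) = stepSeq d x₀ n + d (stepSeq d x₀ n) :=
  Function.iterate_succ_apply' _ _ _

theorem stepSeq_succ_sub (n : ℕ) :
    stepSeq d x₀ (n + 1) - stepSeq d x₀ n = d (stepSeq d x₀ n) :=
  sub_eq_of_eq_add' (stepSeq_succ d x₀ n)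

variable {d}

theorem monotone_stepSeq (hd : ∀ x, 0 ≤ d x) : Monotone (stepSeq d x₀) :=
  monotone_nat_of_le_succ fun n => by
    rw [stepSeq_succ]
    exact le_add_of_nonneg_right (hd _)

theorem cond2_stepSeq (hanti : Antitone d) (hpos : ∀ x, 0 < d x) : Cond2 (stepSeq d x₀) := by
  intro n
  simp only [stepSeq_succ_sub]
  exact ⟨hpos _, hanti (monotone_stepSeq x₀ (fun x => (hpos x).le) n.le_succ)⟩

theorem tendsToInfty_stepSeq (hanti : Antitone d) (hpos : ∀ x, 0 < d x) :
    TendsToInfty (stepSeq d x₀) := by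
  have hmono := monotone_stepSeq x₀ fun x => (hpos x).le
  refine (tendsto_atTop_of_monotone hmono).resolve_right ?_
  rintro ⟨l, hl⟩
  have hgap : Tendsto (fun n => d (stepSeq d x₀ n)) atTop (nhds 0) := by
    simpa only [Function.comp_apply, stepSeq_succ_sub, sub_self] using
      (hl.comp (tendsto_add_atTop_nat 1)).sub hl
  have hdl : d l ≤ 0 := ge_of_tendsto' hgap fun n => hanti (hmono.ge_of_tendsto hl n)
  exact (hpos l).not_ge hdl

end StepSeq

theorem exists_antitone_step_le_one_div (f : ℕ → ℕ) :
    ∃ d : ℝ → ℝ, Antitone d ∧ (∀ x, 0 < d x) ∧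
      ∀ (i : ℕ) (x : ℝ), 0 < f i → i < x + d x → d x ≤ 1 / f i := by
  let d (x : ℝ) : ℝ := 1 / (partialSups f ⌈x⌉₊ + 1)
  have hd_one (x : ℝ) : d x ≤ 1 :=
    (div_le_one (Nat.cast_add_one_pos _)).2 (le_add_of_nonneg_left (Nat.cast_nonneg _))
  refine ⟨d, fun x y hxy => ?_, fun x => Nat.one_div_pos_of_nat, fun i x hfi hix => ?_⟩
  · exact Nat.one_div_le_one_div ((partialSups f).monotone (Nat.ceil_mono hxy))
  · have hi : (i : ℝ) < ⌈x⌉₊ + 1 := hix.trans_le (add_le_add (Nat.le_ceil x) (hd_one x))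
    have hiceil : i ≤ ⌈x⌉₊ := Nat.lt_succ_iff.1 (by exact_mod_cast hi)
    have hf_le : f i ≤ partialSups f ⌈x⌉₊ + 1 :=
      (le_partialSups_of_le f hiceil).trans (Nat.le_succ _)
    exact one_div_le_one_div_of_le (by exact_mod_cast hfi) (by exact_mod_cast hf_le)

theorem exists_cond2_le_coverIndex (f : ℕ → ℕ) :
    ∃ a : ℕ → ℝ, TendsToInfty a ∧ Cond2 a ∧ f ≤ coverIndex a := by
  obtain ⟨d, hanti, hpos, hsmall⟩ := exists_antitone_step_le_one_div f
  have htop := tendsToInfty_stepSeq 0 hanti hpos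
  refine ⟨stepSeq d 0, htop, cond2_stepSeq 0 hanti hpos, fun i => ?_⟩
  obtain hfi | hfi := Nat.eq_zero_or_pos (f i)
  · exact hfi ▸ Nat.zero_le _
  have hgap (n : ℕ) (hn : i < stepSeq d 0 (n + 1)) :
      stepSeq d 0 (n + 1) - stepSeq d 0 n ≤ 1 / f i := by
    rw [stepSeq_succ] at hn
    rw [stepSeq_succ_sub]
    exact hsmall i _ hfi hn
  exact le_coverIndex htop hfi <| tailCover_of_gap_le (monotone_stepSeq 0 fun x => (hpos x).le) htop
    (by positivity) (Nat.cast_nonneg i) hgap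

theorem remark2 :
    ∃ Φ : Set (ℕ → ℝ), (∀ a ∈ Φ, TendsToInfty a) ∧
      Cardinal.mk Φ = boundingNumber ∧ CondC Φ ∧ (∀ a ∈ Φ, Cond2 a) ∧ ¬ Cond1 Φ := by
  obtain ⟨F, hF, hFcard⟩ := exists_not_eventuallyDominated_mk_eq_boundingNumber
  choose A htop hgaps hle using exists_cond2_le_coverIndex
  have hΦtop : ∀ a ∈ A '' F, TendsToInfty a := forall_mem_image.2 fun f _ => htop f
  have hnot : ¬ Cond1 (A '' F) := by
    rw [cond1_iff_eventuallyDominated hΦtop, image_image]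
    exact fun hdom => hF (hdom.of_forall_exists_le fun f hf => ⟨_, mem_image_of_mem _ hf, hle f⟩)
  have hcard : Cardinal.mk (A '' F) = boundingNumber :=
    le_antisymm (Cardinal.mk_image_le.trans_eq hFcard)
      (boundingNumber_le_mk_of_not_cond1 hΦtop hnot)
  exact ⟨A '' F, hΦtop, hcard, condC_of_not_cond1 hnot, forall_mem_image.2 fun f _ => hgaps f, hnot⟩
end

section
/- Let X ⊆ ℝ be a set that is not meagre (not of first category). Then the family Φ = { (n ↦ x + log(n+1)) : x ∈ X } of real sequences satisfies: every member tends to ∞; Φ satisfies condition (C); every a ∈ Φ satisfies 0 < a(n+1) − a(n) ≤ a(n) − a(n−1) for all n ≥ 1; and there exists g : ℕ → ℕ such that for every a ∈ Φ, for all but finitely many i ∈ ℕ and every j ≥ 1, (i, ∞) ⊆ ⋃_{n∈ℕ} (a(n) − 1/j, a(n) + 1/j) implies j ≤ g(i). -/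
open Filter Set

/-!
If `b → ∞` has vanishing gaps and `U` is open and unbounded above, then for each `k` the open set
`{x | ∃ n ≥ k, x + b n ∈ U}` is dense: pick `u ∈ U` far out and slide the last term of `y + b`
before `u` onto `u`. Hence comeagrely many translates of `b` visit `U` infinitely often, and a
non-meagre set contains such an `x`.

For condition (1), the range of `b` is closed and countable, so for each `i` there is a point
`y > 2 * i` at some distance `δ > 0` from it. As soon as `i ≥ -x`, the point `x + y` lies in
`(i, ∞)` and has distance at least `δ` from all terms of `x + b`, so a covering radius `1 / j`
exceeds `δ`, which does not depend on `x`.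
-/

open scoped Topology

lemma exists_le_and_lt_succ_of_tendsto_atTop {α : Type*} [LinearOrder α] [NoMaxOrder α]
    {b : ℕ → α} (hb : Tendsto b atTop atTop) {N : ℕ} {t : α} (hN : b N ≤ t) :
    ∃ n ≥ N, b n ≤ t ∧ t < b (n + 1) := by
  by_contra! hstay
  have hbound : ∀ n ≥ N, b n ≤ t := fun n hn ↦ Nat.le_induction hN hstay n hn
  obtain ⟨n, hn, hlt⟩ := exists_lt_of_tendsto_atTop hb N t
  exact (hbound n hn).not_gt hlt

lemma isClosed_range_of_tendsto_cocompact {ι α : Type*} [TopologicalSpace α] [T2Space α]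
    [WeaklyLocallyCompactSpace α] {f : ι → α} (hf : Tendsto f cofinite (cocompact α)) :
    IsClosed (range f) := by
  let _ : TopologicalSpace ι := ⊥
  have _ : DiscreteTopology ι := ⟨rfl⟩
  rw [← cocompact_eq_cofinite] at hf
  have hproper : IsProperMap f :=
    isProperMap_iff_tendsto_cocompact.2 ⟨continuous_of_discreteTopology, hf⟩
  exact hproper.isClosedMap.isClosed_range

lemma isOpen_setOf_exists_ge_add_mem {G : Type*} [TopologicalSpace G] [Add G] [ContinuousAdd G]
    {U : Set G} (hU : IsOpen U) (b : ℕ → G) (k : ℕ) : IsOpen {x : G | ∃ n ≥ k, x + b n ∈ U} := by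
  simp only [ofPred_exists, ← exists_prop]
  exact isOpen_iUnion fun n ↦ isOpen_iUnion fun _ ↦ hU.preimage (continuous_add_const (b n))

section RealSequence

variable {b : ℕ → ℝ} {U : Set ℝ}

lemma exists_gt_forall_le_dist_of_tendsto_atTop (hb : Tendsto b atTop atTop) (c : ℝ) :
    ∃ y > c, ∃ δ > 0, ∀ n, δ ≤ dist (b n) y := by
  have hb_cocompact : Tendsto b cofinite (cocompact ℝ) := by
    rw [Nat.cofinite_eq_atTop]
    exact hb.mono_right atTop_le_cocompact
  obtain ⟨y, hcy, hy⟩ :=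
    ((countable_range b).dense_compl ℝ).inter_open_nonempty (Ioi c) isOpen_Ioi nonempty_Ioi
  obtain ⟨δ, hδ, hball⟩ :=
    Metric.isOpen_iff.1 (isClosed_range_of_tendsto_cocompact hb_cocompact).isOpen_compl y hy
  exact ⟨y, hcy, δ, hδ, fun n ↦ not_lt.1 fun hlt ↦ hball hlt (mem_range_self n)⟩

lemma dense_setOf_exists_ge_add_mem (hb : Tendsto b atTop atTop)
    (hgap : Tendsto (fun n ↦ b (n + 1) - b n) atTop (𝓝 0)) (hU : ¬ BddAbove U) (k : ℕ) :
    Dense {x : ℝ | ∃ n ≥ k, x + b n ∈ U} := by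
  rw [Metric.dense_iff]
  intro y ε hε
  obtain ⟨N, hsmall⟩ := eventually_atTop.1 (hgap.eventually_lt_const hε)
  obtain ⟨u, huU, hu⟩ := not_bddAbove_iff.1 hU (y + b (max N k))
  obtain ⟨n, hn, hle, hlt⟩ :=
    exists_le_and_lt_succ_of_tendsto_atTop hb (lt_sub_iff_add_lt'.2 hu).le
  have hgap_n : b (n + 1) - b n < ε := hsmall n (le_of_max_le_left hn)
  refine ⟨u - b n, ?_, n, le_of_max_le_right hn, by rwa [sub_add_cancel]⟩
  rw [Metric.mem_ball, Real.dist_eq, abs_lt]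
  constructor <;> linarith

lemma eventually_residual_frequently_add_mem (hb : Tendsto b atTop atTop)
    (hgap : Tendsto (fun n ↦ b (n + 1) - b n) atTop (𝓝 0)) (hU : IsOpen U)
    (hU' : ¬ BddAbove U) : ∀ᶠ x in residual ℝ, ∃ᶠ n in atTop, x + b n ∈ U := by
  simp only [frequently_atTop]
  exact eventually_countable_forall.2 fun k ↦ residual_of_dense_open
    (isOpen_setOf_exists_ge_add_mem hU b k) (dense_setOf_exists_ge_add_mem hb hgap hU' k)

end RealSequence

/-- The family of translates `x + b` of a sequence `b` by the elements `x` of `X`. -/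
def translates (X : Set ℝ) (b : ℕ → ℝ) : Set (ℕ → ℝ) :=
  {a | ∃ x ∈ X, a = fun n ↦ x + b n}

section Translates

variable {b : ℕ → ℝ} {X : Set ℝ}

lemma condC_translates (hX : ¬ IsMeagre X) (hb : Tendsto b atTop atTop)
    (hgap : Tendsto (fun n ↦ b (n + 1) - b n) atTop (𝓝 0)) : CondC (translates X b) := by
  intro U hU hU'
  have hX_freq : ∃ᶠ x in residual ℝ, x ∈ X := hX
  obtain ⟨x, hxX, hx⟩ := (hX_freq.and_eventually
    (eventually_residual_frequently_add_mem hb hgap hU hU')).exists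
  exact ⟨_, ⟨x, hxX, rfl⟩, Nat.frequently_atTop_iff_infinite.1 hx⟩

lemma cond1_translates (X : Set ℝ) (hb : Tendsto b atTop atTop) : Cond1 (translates X b) := by
  choose y hy δ hδ hdist using
    fun i : ℕ ↦ exists_gt_forall_le_dist_of_tendsto_atTop hb (2 * i)
  refine ⟨fun i ↦ ⌊1 / δ i⌋₊, ?_⟩
  rintro _ ⟨x, -, rfl⟩
  filter_upwards [tendsto_natCast_atTop_atTop.eventually_ge_atTop (-x)] with i hi j hj hcover
  have hmem : x + y i ∈ Ioi (i : ℝ) := by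
    rw [mem_Ioi]
    linarith [hy i]
  obtain ⟨n, hn⟩ := mem_iUnion.1 (hcover hmem)
  have hclose : dist (b n) (y i) < 1 / j := by
    rwa [← Real.ball_eq_Ioo, Metric.mem_ball', dist_add_left] at hn
  have hδj : δ i < 1 / j := (hdist i n).trans_lt hclose
  have hj_pos : (0 : ℝ) < j := Nat.cast_pos.2 hj
  exact Nat.le_floor ((lt_one_div (hδ i) hj_pos).1 hδj).le

lemma Cond2.const_add (hb : Cond2 b) (x : ℝ) : Cond2 fun n ↦ x + b n := by
  simpa only [Cond2, add_sub_add_left_eq_sub] using hb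

theorem remark3a_general (hX : ¬ IsMeagre X) (hb : Tendsto b atTop atTop)
    (hgap : Tendsto (fun n ↦ b (n + 1) - b n) atTop (𝓝 0)) (hb_concave : Cond2 b) :
    (∀ a ∈ translates X b, TendsToInfty a) ∧ CondC (translates X b) ∧
      (∀ a ∈ translates X b, Cond2 a) ∧ Cond1 (translates X b) := by
  refine ⟨?_, condC_translates hX hb hgap, ?_, cond1_translates X hb⟩
  · rintro _ ⟨x, -, rfl⟩
    exact tendsto_atTop_add_const_left _ x hb
  · rintro _ ⟨x, -, rfl⟩
    exact hb_concave.const_add x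

end Translates

lemma cond2_of_concaveOn_of_strictMonoOn {f : ℝ → ℝ} {c : ℝ} (hf : ConcaveOn ℝ (Ici c) f)
    (hf_mono : StrictMonoOn f (Ici c)) : Cond2 fun n ↦ f (n + c) := by
  intro n
  have hmem (m : ℕ) : (m : ℝ) + c ∈ Ici c :=
    mem_Ici.2 <| le_add_of_nonneg_left m.cast_nonneg
  have hlt (m : ℕ) : (m : ℝ) + c < (m + 1 : ℕ) + c := by simp
  have hslope := hf.slope_anti_adjacent (hmem n) (hmem (n + 2)) (hlt n) (hlt (n + 1))
  have hstep (m : ℕ) : ((m + 1 : ℕ) : ℝ) + c - (m + c) = 1 := by push_cast; ring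
  rw [hstep, hstep, div_one, div_one] at hslope
  exact ⟨sub_pos.2 (hf_mono (hmem (n + 1)) (hmem (n + 2)) (hlt (n + 1))), hslope⟩

lemma cond2_log_natCast_add_one : Cond2 fun n ↦ Real.log (n + 1) :=
  have hsub : Ici (1 : ℝ) ⊆ Ioi 0 := Ici_subset_Ioi.2 one_pos
  cond2_of_concaveOn_of_strictMonoOn
    (strictConcaveOn_log_Ioi.concaveOn.subset hsub (convex_Ici 1))
    (Real.strictMonoOn_log.mono hsub)

lemma tendsto_natCast_add_one_atTop : Tendsto (fun n : ℕ ↦ (n : ℝ) + 1) atTop atTop :=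
  tendsto_atTop_add_const_right _ 1 tendsto_natCast_atTop_atTop

lemma tendsto_log_natCast_add_one_atTop :
    Tendsto (fun n : ℕ ↦ Real.log (n + 1)) atTop atTop :=
  Real.tendsto_log_atTop.comp tendsto_natCast_add_one_atTop

lemma tendsto_gap_log_natCast_add_one :
    Tendsto (fun n : ℕ ↦ Real.log ((n + 1 : ℕ) + 1) - Real.log (n + 1)) atTop (𝓝 0) := by
  simpa only [Nat.cast_add_one, Function.comp_def] using
    (Real.tendsto_log_comp_add_sub_log 1).comp tendsto_natCast_add_one_atTop

theorem remark3a (X : Set ℝ) (hX : ¬ IsMeagre X) :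
    (∀ a ∈ {a : ℕ → ℝ | ∃ x ∈ X, a = fun n : ℕ => x + Real.log (n + 1)}, TendsToInfty a) ∧
    CondC {a : ℕ → ℝ | ∃ x ∈ X, a = fun n : ℕ => x + Real.log (n + 1)} ∧
    (∀ a ∈ {a : ℕ → ℝ | ∃ x ∈ X, a = fun n : ℕ => x + Real.log (n + 1)}, Cond2 a) ∧
    Cond1 {a : ℕ → ℝ | ∃ x ∈ X, a = fun n : ℕ => x + Real.log (n + 1)} :=
  remark3a_general hX tendsto_log_natCast_add_one_atTop tendsto_gap_log_natCast_add_one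
    cond2_log_natCast_add_one
end

section
/- Let x : ℕ → ℝ be a sequence tending to ∞, let ψ : ℕ → ℚ⁺ be a bijection onto the positive rational numbers, and let F ⊆ ℕ^ℕ be a set of functions such that there is no g : ℕ → ℕ with: for every f ∈ F and all but finitely many k, g(k) ≠ f(k). Then the family Φ = { (n ↦ x(n) + ψ(f(n))) : f ∈ F } consists of sequences tending to ∞, satisfies condition (C), and satisfies condition (1): there exists g : ℕ → ℕ such that for every a ∈ Φ, for all but finitely many i ∈ ℕ and every j ≥ 1, (i, ∞) ⊆ ⋃_{n∈ℕ} (a(n) − 1/j, a(n) + 1/j) implies j ≤ g(i). -/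
open Filter Set

/-!
Condition (C): for every `n` the open set `U` contains some `x n + q` with `q` a positive rational,
because `ℚ⁺` is dense in `(0, ∞)`. Choosing such a `q` for each `n` gives a function which some
`f ∈ F` agrees with infinitely often.

Condition (1): all sequences of the family lie above one sequence `y` tending to `∞`, a translate
of `x`. An interval of radius `1 / j ≤ 1` meeting `(i, i + 1)` has its centre below `i + 2`, so only
the indices with `y n < i + 2` matter. If there are `N` of them, comparing lengths gives
`1 ≤ N * (2 / j)`, that is `j ≤ 2 * N`, a bound independent of the sequence.
-/

lemma exists_mem_frequently_mem_of_nonempty {ι α : Type*} {l : Filter ι} {F : Set (ι → α)}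
    (hF : ¬ ∃ g : ι → α, ∀ f ∈ F, ∀ᶠ i in l, g i ≠ f i) {A : ι → Set α}
    (hA : ∀ i, (A i).Nonempty) : ∃ f ∈ F, ∃ᶠ i in l, f i ∈ A i := by
  choose g hg using hA
  by_contra! hne
  refine hF ⟨g, fun f hf => ?_⟩
  filter_upwards [hne f hf] with i hi hgf
  exact hi (hgf ▸ hg i)

lemma exists_add_mem_of_Ioi_subset_closure {G : Type*} [AddCommGroup G] [LinearOrder G]
    [IsOrderedAddMonoid G] [TopologicalSpace G] [ContinuousAdd G] {D U : Set G} {b : G}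
    (hD : Ioi b ⊆ closure D) (hU : IsOpen U) (hU' : ¬ BddAbove U) (c : G) :
    ∃ d ∈ D, c + d ∈ U := by
  obtain ⟨u, huU, hu⟩ := not_bddAbove_iff.1 hU' (c + b)
  have hmem : u - c ∈ closure D := hD (lt_sub_iff_add_lt'.2 hu)
  obtain ⟨d, hdU, hdD⟩ := mem_closure_iff.1 hmem ((c + ·) ⁻¹' U)
    (hU.preimage (continuous_const_add c)) (by simpa using huU)
  exact ⟨d, hdD, hdU⟩

lemma condC_add_of_Ioi_subset_closure_range {α : Type*} (x : ℕ → ℝ) {φ : α → ℝ} {b : ℝ}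
    (hφ : Ioi b ⊆ closure (range φ)) {F : Set (ℕ → α)}
    (hF : ¬ ∃ g : ℕ → α, ∀ f ∈ F, ∀ᶠ k in atTop, g k ≠ f k) :
    CondC {a : ℕ → ℝ | ∃ f ∈ F, a = fun n : ℕ => x n + φ (f n)} := by
  intro U hU hU'
  have hne (n : ℕ) : {m | x n + φ m ∈ U}.Nonempty := by
    obtain ⟨_, ⟨m, rfl⟩, hm⟩ := exists_add_mem_of_Ioi_subset_closure hφ hU hU' (x n)
    exact ⟨m, hm⟩
  obtain ⟨f, hfF, hf⟩ := exists_mem_frequently_mem_of_nonempty hF hne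
  exact ⟨_, ⟨f, hfF, rfl⟩, Nat.frequently_atTop_iff_infinite.1 hf⟩

lemma sub_le_sum_of_Ioo_subset_biUnion_Ioo {ι : Type*} {S : Finset ι} {u v : ι → ℝ} {p q : ℝ}
    (huv : ∀ i ∈ S, u i ≤ v i) (h : Ioo p q ⊆ ⋃ i ∈ S, Ioo (u i) (v i)) :
    q - p ≤ ∑ i ∈ S, (v i - u i) := by
  have hlen (i : ι) (hi : i ∈ S) : 0 ≤ v i - u i := sub_nonneg.2 (huv i hi)
  rw [← ENNReal.ofReal_le_ofReal_iff (Finset.sum_nonneg hlen), ENNReal.ofReal_sum_of_nonneg hlen]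
  simpa only [Real.volume_Ioo] using
    (MeasureTheory.measure_mono (μ := MeasureTheory.volume) h).trans
      (MeasureTheory.measure_biUnion_finset_le S _)

lemma sub_le_card_mul_of_Ioo_subset_iUnion_Ioo {ι : Type*} {S : Finset ι} {c : ι → ℝ} {p q r : ℝ}
    (hr : 0 ≤ r) (hS : ∀ i, c i < q + r → i ∈ S)
    (h : Ioo p q ⊆ ⋃ i, Ioo (c i - r) (c i + r)) : q - p ≤ S.card * (2 * r) := by
  have hsub : Ioo p q ⊆ ⋃ i ∈ S, Ioo (c i - r) (c i + r) := fun t ht => by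
    obtain ⟨i, hi⟩ := mem_iUnion.1 (h ht)
    exact mem_biUnion (hS i (by linarith [hi.1, ht.2])) hi
  calc
    q - p ≤ ∑ i ∈ S, (c i + r - (c i - r)) :=
      sub_le_sum_of_Ioo_subset_biUnion_Ioo (fun i _ => by linarith) hsub
    _ = S.card * (2 * r) := by
      simp only [add_sub_sub_cancel, Finset.sum_const, nsmul_eq_mul, two_mul]

lemma cond1_of_forall_le {y : ℕ → ℝ} (hy : TendsToInfty y) {Φ : Set (ℕ → ℝ)}
    (hΦ : ∀ a ∈ Φ, y ≤ a) : Cond1 Φ := by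
  have hfin (i : ℕ) : {n : ℕ | y n < i + 2}.Finite := by
    have hev := hy.eventually_ge_atTop ((i : ℝ) + 2)
    rw [← Nat.cofinite_eq_atTop, eventually_cofinite] at hev
    simpa only [not_le] using hev
  refine ⟨fun i => 2 * (hfin i).toFinset.card, fun a ha => .of_forall fun i j hj hcov => ?_⟩
  have hj₀ : (0 : ℝ) < j := by exact_mod_cast hj
  have hj₁ : 1 / (j : ℝ) ≤ 1 := (div_le_one hj₀).2 (by exact_mod_cast hj)
  have hS (n : ℕ) (hn : a n < (i + 1 : ℝ) + 1 / j) : n ∈ (hfin i).toFinset :=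
    (hfin i).mem_toFinset.2 (show y n < i + 2 by linarith [hΦ a ha n])
  have hlen := sub_le_card_mul_of_Ioo_subset_iUnion_Ioo (by positivity) hS
    (Ioo_subset_Ioi_self.trans hcov)
  have hle : (j : ℝ) ≤ 2 * (hfin i).toFinset.card := by
    field_simp at hlen
    linarith
  exact_mod_cast hle

lemma Ioi_zero_subset_closure_range_posRat_cast :
    Ioi (0 : ℝ) ⊆ closure (range fun q : {q : ℚ // 0 < q} => ((q : ℚ) : ℝ)) := by
  refine (Rat.denseRange_cast.open_subset_closure_inter isOpen_Ioi).trans (closure_mono ?_)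
  rintro _ ⟨hq, q, rfl⟩
  exact ⟨⟨q, Rat.cast_pos.1 (mem_Ioi.1 hq)⟩, rfl⟩

theorem remark3b_general {α : Type*} (x : ℕ → ℝ) (hx : TendsToInfty x) (φ : α → ℝ)
    (hbdd : BddBelow (range φ)) {b : ℝ} (hdense : Ioi b ⊆ closure (range φ)) (F : Set (ℕ → α))
    (hF : ¬ ∃ g : ℕ → α, ∀ f ∈ F, ∀ᶠ k in atTop, g k ≠ f k) :
    (∀ a ∈ {a : ℕ → ℝ | ∃ f ∈ F, a = fun n : ℕ => x n + φ (f n)}, TendsToInfty a) ∧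
    CondC {a : ℕ → ℝ | ∃ f ∈ F, a = fun n : ℕ => x n + φ (f n)} ∧
    Cond1 {a : ℕ → ℝ | ∃ f ∈ F, a = fun n : ℕ => x n + φ (f n)} := by
  obtain ⟨c, hc⟩ := hbdd
  have hy : TendsToInfty fun n => x n + c := tendsto_atTop_add_const_right atTop c hx
  have hle : ∀ a ∈ {a : ℕ → ℝ | ∃ f ∈ F, a = fun n : ℕ => x n + φ (f n)},
      (fun n => x n + c) ≤ a := by
    rintro _ ⟨f, -, rfl⟩ n
    exact add_le_add_right (hc (mem_range_self (f n))) (x n)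
  exact ⟨fun a ha => tendsto_atTop_mono (hle a ha) hy,
    condC_add_of_Ioi_subset_closure_range x hdense hF, cond1_of_forall_le hy hle⟩

theorem remark3b (x : ℕ → ℝ) (hx : TendsToInfty x)
    (ψ : ℕ → {q : ℚ // 0 < q}) (hψ : Function.Bijective ψ)
    (F : Set (ℕ → ℕ))
    (hF : ¬ ∃ g : ℕ → ℕ, ∀ f ∈ F, ∀ᶠ k in Filter.atTop, g k ≠ f k) :
    (∀ a ∈ {a : ℕ → ℝ | ∃ f ∈ F, a = fun n : ℕ => x n + ((ψ (f n) : ℚ) : ℝ)},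
      TendsToInfty a) ∧
    CondC {a : ℕ → ℝ | ∃ f ∈ F, a = fun n : ℕ => x n + ((ψ (f n) : ℚ) : ℝ)} ∧
    Cond1 {a : ℕ → ℝ | ∃ f ∈ F, a = fun n : ℕ => x n + ((ψ (f n) : ℚ) : ℝ)} := by
  have hdense : Ioi (0 : ℝ) ⊆ closure (range fun m => ((ψ m : ℚ) : ℝ)) :=
    Ioi_zero_subset_closure_range_posRat_cast.trans_eq
      (congrArg closure (hψ.surjective.range_comp fun q => ((q : ℚ) : ℝ)).symm)
  have hpos : BddBelow (range fun m => ((ψ m : ℚ) : ℝ)) :=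
    ⟨0, forall_mem_range.2 fun m => Rat.cast_nonneg.2 (ψ m).2.le⟩
  exact remark3b_general x hx _ hpos hdense F hF
end

section
/- Let Φ be a family of real sequences each tending to ∞ such that every a ∈ Φ satisfies condition (3): there exists r > 0 with a(n+1) − a(n) > r for all n ∈ ℕ. Then Φ satisfies condition (1): there exists g : ℕ → ℕ such that for every a ∈ Φ, for all but finitely many i ∈ ℕ and every j ≥ 1, if (i, ∞) ⊆ ⋃_{n∈ℕ} (a(n) − 1/j, a(n) + 1/j) then j ≤ g(i). -/
/-!
If arbitrarily far out there are intervals of length `r > 0` that contain no term of `a`, then the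
midpoint of such an interval is at distance at least `r / 2` from every term. So the radius `1 / j`
of a covering of some `(i, ∞)` exceeds `r / 2`, that is `j < 2 / r`. This bound depends on `a` but
not on `i`, and hence the identity eventually dominates every `f_a`.
-/

open Filter Set

theorem half_lt_radius_of_Ioi_subset_iUnion_Ioo {ι 𝕜 : Type*} [Field 𝕜] [LinearOrder 𝕜]
    [IsStrictOrderedRing 𝕜] {a : ι → 𝕜} {r c ε : 𝕜}
    (hgap : ∃ᶠ x in atTop, Disjoint (range a) (Ioo x (x + r)))
    (hcover : Ioi c ⊆ ⋃ n, Ioo (a n - ε) (a n + ε)) : r / 2 < ε := by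
  obtain ⟨x, hx, hcx⟩ := (hgap.and_eventually (eventually_gt_atTop (c - r / 2))).exists
  have hmid : x + r / 2 ∈ Ioi c := sub_lt_iff_lt_add.mp hcx
  obtain ⟨n, hleft, hright⟩ := mem_iUnion.mp (hcover hmid)
  have hn : a n ∉ Ioo x (x + r) := disjoint_left.mp hx (mem_range_self n)
  rcases le_or_gt (a n) x with hle | hlt
  · linarith
  · have hge : x + r ≤ a n := not_lt.mp fun h => hn ⟨hlt, h⟩
    linarith

theorem frequently_disjoint_range_Ioo {G : Type*} [AddCommGroup G] [LinearOrder G]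
    [IsOrderedAddMonoid G] {a : ℕ → G} {r : G} (hmono : Monotone a)
    (htop : Tendsto a atTop atTop) (hgap : ∃ᶠ n in atTop, r ≤ a (n + 1) - a n) :
    ∃ᶠ x in atTop, Disjoint (range a) (Ioo x (x + r)) := by
  refine htop.frequently (hgap.mono fun n hn => disjoint_left.mpr ?_)
  rintro _ ⟨k, rfl⟩ ⟨hleft, hright⟩
  have hlt : a k < a (n + 1) := hright.trans_le (le_sub_iff_add_le'.mp hn)
  exact hmono.ne_of_lt_of_lt_nat n hleft hlt k rfl

theorem Cond3.monotone {a : ℕ → ℝ} (h : Cond3 a) : Monotone a := by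
  obtain ⟨r, hr, hgap⟩ := h
  exact monotone_nat_of_le_succ fun n => sub_nonneg.mp (hr.trans (hgap n)).le

theorem Cond3.exists_frequently_disjoint_range_Ioo {a : ℕ → ℝ} (h : Cond3 a)
    (htop : TendsToInfty a) :
    ∃ r > 0, ∃ᶠ x in atTop, Disjoint (range a) (Ioo x (x + r)) := by
  have ⟨r, hr, hgap⟩ := h
  exact ⟨r, hr, frequently_disjoint_range_Ioo h.monotone htop (.of_forall fun n => (hgap n).le)⟩

theorem cond3_implies_cond1_general (Φ : Set (ℕ → ℝ))
    (hgap : ∀ a ∈ Φ, ∃ r > 0, ∃ᶠ x in atTop, Disjoint (range a) (Ioo x (x + r))) :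
    Cond1 Φ := by
  refine ⟨id, fun a ha => ?_⟩
  obtain ⟨r, hr, hfreq⟩ := hgap a ha
  filter_upwards [tendsto_natCast_atTop_atTop.eventually_gt_atTop (2 / r)] with i hi j hj hcover
  have hradius : r / 2 < 1 / (j : ℝ) := half_lt_radius_of_Ioi_subset_iUnion_Ioo hfreq hcover
  have hj_lt : (j : ℝ) < 2 / r := by
    rwa [lt_one_div (half_pos hr) (Nat.cast_pos.mpr hj), one_div_div] at hradius
  exact_mod_cast (hj_lt.trans hi).le

theorem cond3_implies_cond1 (Φ : Set (ℕ → ℝ)) (hΦ : ∀ a ∈ Φ, TendsToInfty a)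
    (h3 : ∀ a ∈ Φ, Cond3 a) : Cond1 Φ :=
  cond3_implies_cond1_general Φ fun a ha =>
    (h3 a ha).exists_frequently_disjoint_range_Ioo (hΦ a ha)
end

section
/- Let X ⊆ (0, ∞) be a set that is not meagre (not of first category). Then the family Φ = { (n ↦ (n+1)·x) : x ∈ X } consists of sequences tending to ∞, satisfies condition (C), and every member satisfies condition (3): there exists r > 0 such that a(n+1) − a(n) > r for all n ∈ ℕ. -/
/-!
Only condition (C) is not elementary. A sequence `c` tending to `∞` with `c (n + 1) / c n → 1` grows
so slowly that, for any `0 < x < y`, every large `u` lies between `c n * x` and `c n * y` for some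
large `n`. So if `U` is unbounded above, arbitrarily close to `x` there are points
`y` with `c n * y ∈ U` and `n` as large as we like. If `U` is also open, then by Baire category
almost every `x > 0`, in the sense of category, satisfies `c n * x ∈ U` itself for infinitely many
`n`, and a non-meagre set contains such an `x`.
-/

open Filter Set

open scoped Topology

section Residual

variable {ι α β : Type*} [TopologicalSpace α] [TopologicalSpace β]

theorem eventually_residual_mem_of_mem_closure {G : Set α} (hG : IsOpen G) :
    ∀ᶠ x in residual α, x ∈ closure G → x ∈ G := by
  have hfrontier : IsMeagre (frontier G) := by
    refine (isClosed_frontier.isNowhereDense_iff.2 ?_).isMeagre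
    rw [← frontier_compl, interior_frontier hG.isClosed_compl]
  filter_upwards [hfrontier] with x hx hxG
  by_contra hxG'
  exact hx (hG.frontier_eq ▸ ⟨hxG, hxG'⟩)

theorem eventually_residual_frequently_mem {l : Filter ι} [l.IsCountablyGenerated]
    {f : ι → α → β} (hf : ∀ i, Continuous (f i)) {U : Set β} (hU : IsOpen U) :
    ∀ᶠ x in residual α, (∃ᶠ p in l ×ˢ 𝓝 x, f p.1 p.2 ∈ U) → ∃ᶠ i in l, f i x ∈ U := by
  obtain ⟨s, hs⟩ := l.exists_antitone_basis
  let G (k : ℕ) : Set α := ⋃ i ∈ s k, f i ⁻¹' U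
  have hG (k : ℕ) : IsOpen (G k) := isOpen_biUnion fun i _ ↦ hU.preimage (hf i)
  have hclosureG : ∀ᶠ x in residual α, ∀ k, x ∈ closure (G k) → x ∈ G k :=
    eventually_countable_forall.2 fun k ↦ eventually_residual_mem_of_mem_closure (hG k)
  filter_upwards [hclosureG] with x hx hfreq
  refine hs.toHasBasis.frequently_iff.2 fun {k} _ ↦ ?_
  have hclosure : x ∈ closure (G k) := by
    refine mem_closure_iff_nhds.2 fun V hV ↦ ?_
    obtain ⟨⟨i, y⟩, hUy, hi, hy⟩ :=
      (hfreq.and_eventually (prod_mem_prod (hs.mem k) hV)).exists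
    exact ⟨y, hy, mem_biUnion hi hUy⟩
  simpa only [G, mem_iUnion₂, exists_prop, mem_preimage] using hx k hclosure

end Residual

theorem exists_ge_mem_Ico_succ {α : Type*} [LinearOrder α] [NoMaxOrder α] {v : ℕ → α}
    (hv : Tendsto v atTop atTop) {N : ℕ} {u : α} (hu : v N ≤ u) :
    ∃ n ≥ N, u ∈ Ico (v n) (v (n + 1)) := by
  by_contra! h
  have hbounded : ∀ n ≥ N, v n ≤ u :=
    Nat.le_induction hu fun n hn hnu ↦ not_lt.1 fun hlt ↦ h n hn ⟨hnu, hlt⟩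
  obtain ⟨n, hun, hn⟩ := ((hv.eventually_gt_atTop u).and (eventually_ge_atTop N)).exists
  exact (hbounded n hn).not_gt hun

theorem frequently_mul_mem_of_not_bddAbove {c : ℕ → ℝ} (hc : TendsToInfty c)
    (hratio : Tendsto (fun n ↦ c (n + 1) / c n) atTop (𝓝 1)) {U : Set ℝ} (hU : ¬ BddAbove U)
    {x : ℝ} (hx : 0 < x) :
    ∃ᶠ p in atTop ×ˢ 𝓝[≥] x, c p.1 * p.2 ∈ U := by
  refine (atTop_basis.prod (nhdsGE_basis x)).frequently_iff.2 ?_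
  rintro ⟨N, b⟩ ⟨-, hb⟩
  have hlarge : ∀ᶠ n in atTop, c (n + 1) / c n < b / x ∧ 0 < c n :=
    (hratio.eventually_lt_const ((one_lt_div hx).2 hb)).and (hc.eventually_gt_atTop 0)
  obtain ⟨M, hM⟩ := eventually_atTop.1 hlarge
  obtain ⟨u, huU, hu⟩ := not_bddAbove_iff.1 hU (c (max M N) * x)
  obtain ⟨n, hn, hnu, hun⟩ := exists_ge_mem_Ico_succ hc ((le_div_iff₀ hx).2 hu.le)
  obtain ⟨hquot, hcn⟩ := hM n (le_of_max_le_left hn)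
  have hxu : x ≤ u / c n := (le_div_comm₀ hcn hx).1 hnu
  have hub : u / c n < b := by
    have hlt : u / x / c n < b / x := (div_lt_div_of_pos_right hun hcn).trans hquot
    rwa [div_right_comm, div_lt_div_iff_of_pos_right hx] at hlt
  refine ⟨(n, u / c n), ⟨le_of_max_le_right hn, hxu, hub⟩, ?_⟩
  rwa [mul_div_cancel₀ _ hcn.ne']

/-- The family of the sequences `c · x` for `x ∈ X`; the family of the theorem is the case
`c n = n + 1`. -/
def dilates (c : ℕ → ℝ) (X : Set ℝ) : Set (ℕ → ℝ) :=
  {a | ∃ x ∈ X, a = fun n ↦ c n * x}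

theorem condC_dilates {c : ℕ → ℝ} (hc : TendsToInfty c)
    (hratio : Tendsto (fun n ↦ c (n + 1) / c n) atTop (𝓝 1)) {X : Set ℝ} (hX0 : X ⊆ Ioi 0)
    (hX : ¬ IsMeagre X) : CondC (dilates c X) := by
  intro U hUo hU
  have hXfreq : ∃ᶠ x in residual ℝ, x ∈ X := hX
  have hresidual := eventually_residual_frequently_mem (l := atTop)
    (fun n ↦ continuous_const_mul (c n)) hUo
  obtain ⟨x, hxX, hx⟩ := (hXfreq.and_eventually hresidual).exists
  have hnear : ∃ᶠ p in atTop ×ˢ 𝓝 x, c p.1 * p.2 ∈ U :=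
    (frequently_mul_mem_of_not_bddAbove hc hratio hU (hX0 hxX)).filter_mono
      (prod_mono_right _ nhdsWithin_le_nhds)
  exact ⟨_, ⟨x, hxX, rfl⟩, Nat.frequently_atTop_iff_infinite.1 (hx hnear)⟩

theorem Cond3.tendsToInfty {a : ℕ → ℝ} (ha : Cond3 a) : TendsToInfty a := by
  obtain ⟨r, hr, hgap⟩ := ha
  have hlinear (n : ℕ) : a 0 + n * r ≤ a n := by
    induction n with
    | zero => simp
    | succ n ih =>
      push_cast
      linarith [hgap n]
  exact tendsto_atTop_mono hlinear
    (tendsto_atTop_add_const_left _ _ (tendsto_natCast_atTop_atTop.atTop_mul_const hr))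

theorem Cond3.mul_const {a : ℕ → ℝ} (ha : Cond3 a) {x : ℝ} (hx : 0 < x) :
    Cond3 fun n ↦ a n * x := by
  obtain ⟨r, hr, hgap⟩ := ha
  refine ⟨r * x, mul_pos hr hx, fun n ↦ ?_⟩
  rw [← sub_mul]
  exact mul_lt_mul_of_pos_right (hgap n) hx

theorem cond3_natCast_add_one : Cond3 fun n ↦ (n : ℝ) + 1 :=
  ⟨1 / 2, one_half_pos, fun n ↦ by push_cast; linarith⟩

theorem tendsto_natCast_add_two_div_add_one :
    Tendsto (fun n : ℕ ↦ (((n + 1 : ℕ) : ℝ) + 1) / ((n : ℝ) + 1)) atTop (𝓝 1) := by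
  have hlim := tendsto_add_mul_div_add_mul_atTop_nhds (2 : ℝ) 1 1 one_ne_zero
  rw [div_one] at hlim
  refine hlim.congr fun n ↦ ?_
  push_cast
  ring

theorem remark5_general {c : ℕ → ℝ} (hc : Cond3 c)
    (hratio : Tendsto (fun n ↦ c (n + 1) / c n) atTop (𝓝 1)) {X : Set ℝ} (hX0 : X ⊆ Ioi 0)
    (hX : ¬ IsMeagre X) :
    (∀ a ∈ dilates c X, TendsToInfty a) ∧ CondC (dilates c X) ∧ ∀ a ∈ dilates c X, Cond3 a := by
  have hgaps : ∀ a ∈ dilates c X, Cond3 a := by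
    rintro _ ⟨x, hxX, rfl⟩
    exact hc.mul_const (hX0 hxX)
  exact ⟨fun a ha ↦ (hgaps a ha).tendsToInfty, condC_dilates hc.tendsToInfty hratio hX0 hX, hgaps⟩

theorem remark5 (X : Set ℝ) (hX0 : X ⊆ Set.Ioi (0 : ℝ)) (hX : ¬ IsMeagre X) :
    (∀ a ∈ {a : ℕ → ℝ | ∃ x ∈ X, a = fun n : ℕ => ((n : ℝ) + 1) * x}, TendsToInfty a) ∧
    CondC {a : ℕ → ℝ | ∃ x ∈ X, a = fun n : ℕ => ((n : ℝ) + 1) * x} ∧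
    (∀ a ∈ {a : ℕ → ℝ | ∃ x ∈ X, a = fun n : ℕ => ((n : ℝ) + 1) * x}, Cond3 a) :=
  remark5_general cond3_natCast_add_one tendsto_natCast_add_two_div_add_one hX0 hX
end

section
/- Let Φ be a family of real sequences each tending to ∞ such that the family {f_a : a ∈ Φ} is unbounded, i.e. there is no g : ℕ → ℕ such that for every a ∈ Φ, for all but finitely many i ∈ ℕ and every j ≥ 1, (i, ∞) ⊆ ⋃_{n∈ℕ} (a(n) − 1/j, a(n) + 1/j) implies j ≤ g(i). Then for every natural number m ≥ 1, Φ satisfies condition (C_m). -/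
/-!
Choose indices `k i → ∞` with `i ≤ x (k i)`, so that `(x (k i), y (k i)) ⊆ (i, ∞)`. Unboundedness
of `Φ` gives `a ∈ Φ` such that, for infinitely many `i`, the intervals of some radius `r` with
`2 m r < y (k i) - x (k i)` around the terms of `a` cover `(i, ∞)`. Inside `(x (k i), y (k i))`
there is then room for `m` disjoint intervals of length `2 r`, and a term of `a` within `r` of the
midpoint of such an interval lies in that interval.
-/

open Filter Set

theorem exists_finset_card_eq_of_pairwise_disjoint {ι κ α : Type*} [Fintype κ] {a : ι → α}
    {S : κ → Set α} (hS : Pairwise (Function.onFun Disjoint S)) (ha : ∀ t, ∃ i, a i ∈ S t) :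
    ∃ s : Finset ι, s.card = Fintype.card κ ∧ ∀ i ∈ s, ∃ t, a i ∈ S t := by
  choose f hf using ha
  have hinj : Function.Injective f := fun t t' h ↦
    hS.eq (not_disjoint_iff.2 ⟨a (f t), hf t, h ▸ hf t'⟩)
  refine ⟨Finset.univ.map ⟨f, hinj⟩, Finset.card_map _, fun i hi ↦ ?_⟩
  obtain ⟨t, -, rfl⟩ := Finset.mem_map.1 hi
  exact ⟨t, hf t⟩

section OrderedAddCommGroup

variable {G : Type*} [AddCommGroup G] [PartialOrder G] [IsOrderedAddMonoid G]

theorem Ioo_add_zsmul_subset_Ioo {u v d : G} {m : ℕ} (hd : 0 ≤ d) (hm : m • d ≤ v - u)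
    (t : Fin m) : Ioo (u + (t : ℤ) • d) (u + ((t : ℤ) + 1) • d) ⊆ Ioo u v := by
  refine Ioo_subset_Ioo (le_add_of_nonneg_right (zsmul_nonneg hd (by positivity))) ?_
  calc u + ((t : ℤ) + 1) • d ≤ u + (m : ℤ) • d := by gcongr; have := t.isLt; omega
    _ ≤ v := by rwa [natCast_zsmul, ← le_sub_iff_add_le']

theorem exists_finset_card_eq_of_Ioo_subset_iUnion {ι : Type*} {a : ι → G} {u v r : G} {m : ℕ}
    (hr : 0 < r) (hm : m • (r + r) ≤ v - u) (hcov : Ioo u v ⊆ ⋃ i, Ioo (a i - r) (a i + r)) :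
    ∃ s : Finset ι, s.card = m ∧ ∀ i ∈ s, a i ∈ Ioo u v := by
  let piece (t : Fin m) : Set G := Ioo (u + (t : ℤ) • (r + r)) (u + ((t : ℤ) + 1) • (r + r))
  have hpiece (t : Fin m) : piece t ⊆ Ioo u v :=
    Ioo_add_zsmul_subset_Ioo (add_pos hr hr).le hm t
  have hdisj : Pairwise (Function.onFun Disjoint piece) := fun t t' htt' ↦
    pairwise_disjoint_Ioo_add_zsmul u (r + r) (by simpa [Fin.ext_iff] using htt')
  have hmeet (t : Fin m) : ∃ i, a i ∈ piece t := by
    have hright : u + ((t : ℤ) + 1) • (r + r) = u + (t : ℤ) • (r + r) + r + r := by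
      rw [add_one_zsmul]; abel
    have hmid : u + (t : ℤ) • (r + r) + r ∈ piece t :=
      ⟨lt_add_of_pos_right _ hr, hright ▸ lt_add_of_pos_right _ hr⟩
    obtain ⟨i, hleft_lt, hlt_right⟩ := mem_iUnion.1 (hcov (hpiece t hmid))
    exact ⟨i, lt_of_add_lt_add_right hlt_right, hright ▸ sub_lt_iff_lt_add.1 hleft_lt⟩
  obtain ⟨s, hcard, hs⟩ := exists_finset_card_eq_of_pairwise_disjoint hdisj hmeet
  refine ⟨s, by simpa using hcard, fun i hi ↦ ?_⟩
  obtain ⟨t, ht⟩ := hs i hi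
  exact hpiece t ht

end OrderedAddCommGroup

theorem exists_frequently_Ioi_subset_iUnion_of_not_cond1 {Φ : Set (ℕ → ℝ)} (hunb : ¬ Cond1 Φ)
    {ε : ℕ → ℝ} (hε : ∀ i, 0 < ε i) :
    ∃ a ∈ Φ, ∃ᶠ i : ℕ in atTop, ∃ r, 0 < r ∧ r ≤ ε i ∧
      Ioi (i : ℝ) ⊆ ⋃ n, Ioo (a n - r) (a n + r) := by
  by_contra! h
  refine hunb ⟨fun i ↦ ⌈1 / ε i⌉₊, fun a ha ↦ ?_⟩
  filter_upwards [h a ha] with i hi j hj hcov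
  by_contra! hlt
  have hj0 : (0 : ℝ) < j := by exact_mod_cast hj
  have hle : 1 / (j : ℝ) ≤ ε i := (one_div_le hj0 (hε i)).2 (Nat.lt_of_ceil_lt hlt).le
  exact hi (1 / j) (one_div_pos.2 hj0) hle hcov

theorem unbounded_implies_condCm_general {Φ : Set (ℕ → ℝ)} (hunb : ¬ Cond1 Φ) (m : ℕ)
    {x y : ℕ → ℝ} (hxy : ∀ k, x k < y k) (hx : Tendsto x atTop atTop) :
    ∃ a ∈ Φ, {k : ℕ | ∃ s : Finset ℕ, m ≤ s.card ∧ ∀ n ∈ s, a n ∈ Ioo (x k) (y k)}.Infinite := by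
  obtain ⟨k, hk, hxk⟩ :=
    extraction_forall_of_eventually fun i : ℕ ↦ hx.eventually_ge_atTop (i : ℝ)
  have hε (i : ℕ) : 0 < (y (k i) - x (k i)) / (2 * m + 1) :=
    div_pos (sub_pos.2 (hxy _)) (by positivity)
  obtain ⟨a, ha, hfreq⟩ := exists_frequently_Ioi_subset_iUnion_of_not_cond1 hunb hε
  refine ⟨a, ha, Nat.frequently_atTop_iff_infinite.1 (hk.tendsto_atTop.frequently (hfreq.mono ?_))⟩
  rintro i ⟨r, hr, hrε, hcov⟩
  have hlen : m • (r + r) ≤ y (k i) - x (k i) := by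
    rw [le_div_iff₀ (by positivity)] at hrε
    rw [nsmul_eq_mul]
    linarith
  have hsub : Ioo (x (k i)) (y (k i)) ⊆ Ioi (i : ℝ) := fun z hz ↦ (hxk i).trans_lt hz.1
  obtain ⟨s, hcard, hs⟩ := exists_finset_card_eq_of_Ioo_subset_iUnion hr hlen (hsub.trans hcov)
  exact ⟨s, hcard.ge, hs⟩

theorem unbounded_implies_condCm (Φ : Set (ℕ → ℝ)) (hΦ : ∀ a ∈ Φ, TendsToInfty a)
    (hunb : ¬ Cond1 Φ) : ∀ m : ℕ, 1 ≤ m → CondCm m Φ :=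
  fun m _ _ _ hxy _ hx ↦ unbounded_implies_condCm_general hunb m hxy hx
end
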